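/- arXiv:2407.10316 — 4 statements merged into one kernel-verified Lean document; each statement's English description precedes it below -/
import Mathlib

section
/- Let n ≥ 1 and let N be a matroid that is representable over the two-element field 𝔽₂ = ZMod 2. If there exists an online matroid embedding of the class of graphic matroids of rank at most n into N, then there is an injective rank-preserving map from the complete binary matroid of rank n into N. -/
open Set

/-- The rank of a set in a matroid: the supremum of the cardinalities of its
independent subsets. -/
noncomputable def mRank {α : Type*} (M : Matroid α) (S : Set α) : ℕ∞ :=
  ⨆ I ∈ {I : Set α | M.Indep I ∧ I ⊆ S}, I.encard

/-- The rank of a set of vectors: the dimension of its linear span. -/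
noncomputable def spanRank (K : Type*) [Field K] {W : Type*} [AddCommGroup W] [Module K W]
    (S : Set W) : ℕ :=
  Module.finrank K (Submodule.span K S)

/-- A matroid is representable over a field `K` if independence coincides with
`K`-linear independence of an assignment of vectors to the elements. -/
def RepOver (K : Type*) [Field K] {α : Type*} (M : Matroid α) : Prop :=
  ∃ (ι : Type) (f : α → ι → K), ∀ I : Set α,
    M.Indep I ↔ I ⊆ M.E ∧ LinearIndependent K (fun x : I => f (x : α))

/-- The `k`-prefix of an ordered matroid on `Fin m`: its restriction to the
first `k` elements, viewed as a matroid on `Fin k`. -/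
def prefixMatroid {k m : ℕ} (h : k ≤ m) (M : Matroid (Fin m)) : Matroid (Fin k) :=
  M.comap (Fin.castLE h)

/-- An online matroid morphism (OMM) of the class `P` of ordered matroids into the host
matroid `N`: a rank-preserving map for each matroid of the class, consistent on prefixes. -/
def OMMof (P : (m : ℕ) → Matroid (Fin m) → Prop) {β : Type*} (N : Matroid β) : Prop :=
  ∃ f : (m : ℕ) → Matroid (Fin m) → (Fin m → β),
    (∀ m (M : Matroid (Fin m)), P m M →
      ∀ S : Set (Fin m), S ⊆ M.E → mRank N (f m M '' S) = mRank M S) ∧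
    (∀ k m (hkm : k ≤ m) (M : Matroid (Fin m)), P m M →
      ∀ i : Fin k, f k (prefixMatroid hkm M) i = f m M (Fin.castLE hkm i))

/-- An online matroid embedding (OME): an online matroid morphism all of whose maps are
injective. -/
def OMEof (P : (m : ℕ) → Matroid (Fin m) → Prop) {β : Type*} (N : Matroid β) : Prop :=
  ∃ f : (m : ℕ) → Matroid (Fin m) → (Fin m → β),
    (∀ m (M : Matroid (Fin m)), P m M → Function.Injective (f m M)) ∧
    (∀ m (M : Matroid (Fin m)), P m M →
      ∀ S : Set (Fin m), S ⊆ M.E → mRank N (f m M '' S) = mRank M S) ∧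
    (∀ k m (hkm : k ≤ m) (M : Matroid (Fin m)), P m M →
      ∀ i : Fin k, f k (prefixMatroid hkm M) i = f m M (Fin.castLE hkm i))

/-- A matroid is graphic if it admits a rank-preserving `𝔽₂` vertex-edge incidence
representation: each element is sent to the zero vector or to the sum of two distinct
standard basis vectors (a vector supported on exactly two vertices). -/
def IsGraphic {α : Type*} (M : Matroid α) : Prop :=
  ∃ (V : Type) (_ : Fintype V) (g : α → V → ZMod 2),
    (∀ S : Set α, S ⊆ M.E → (spanRank (ZMod 2) (g '' S) : ℕ∞) = mRank M S) ∧
    ∀ e ∈ M.E, g e = 0 ∨ ∃ u v : V, u ≠ v ∧ {w | g e w ≠ 0} = {u, v}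

/-!
Binary representations are unique: over `𝔽₂` the linear relations of a family are determined by its
independent sets. For every vector `w`, the matroid on `e₁, …, eₙ, w` is graphic, because an
ordering of the edges that puts the support of `w` first turns the basis into the edges of a path
and `w` into a chord of this path. All these matroids have the prefix `e₁, …, eₙ`, so an online
morphism `f` fixes the images `b₁, …, bₙ` of the basis before `w` is known. In a representation
`φ` of the host, uniqueness forces the image `g w` of `w` to satisfy `φ (g w) = ∑ wᵢ • φ bᵢ`.
Hence `φ ∘ g` is linear; it is injective because a nonzero `w` is independent, so that its image
is not zero.
-/

lemma mRank_eq_eRk {α : Type*} (M : Matroid α) (S : Set α) : mRank M S = M.eRk S :=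
  eq_of_forall_ge_iff fun c => by
    simp only [mRank, mem_ofPred_eq, iSup_le_iff, and_imp, Matroid.eRk_le_iff]
    exact forall_congr' fun I => forall_comm

section SpanRank

variable {K α W W' : Type*} [Field K] [AddCommGroup W] [Module K W] [AddCommGroup W'] [Module K W']

lemma spanRank_image_of_injective {L : W →ₗ[K] W'} (hL : Function.Injective L) (S : Set W) :
    spanRank K (L '' S) = spanRank K S := by
  rw [spanRank, ← Submodule.map_span]
  exact (Submodule.equivMapOfInjective L hL _).finrank_eq.symm

lemma linearIndepOn_iff_spanRank {v : α → W} {I : Set α} (hfin : I.Finite) :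
    LinearIndepOn K v I ↔ (spanRank K (v '' I) : ℕ∞) = I.encard := by
  have := hfin.fintype
  rw [LinearIndepOn, linearIndependent_iff_card_eq_finrank_span, Set.finrank, ← image_eq_range,
    encard_eq_coe_toFinset_card, toFinset_card, spanRank, Nat.cast_inj, eq_comm]

end SpanRank

section Representation

variable {K α β W W' : Type*} [Field K] [AddCommGroup W] [Module K W]
  [AddCommGroup W'] [Module K W']

/-- `v` represents `M` by vectors over `K`. In contrast to `RepOver`, the ground set is not
mentioned: elements outside it are dependent, hence sent to zero. -/
def IsRepresentation (K : Type*) [Field K] {α W : Type*} [AddCommGroup W] [Module K W]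
    (M : Matroid α) (v : α → W) : Prop :=
  ∀ I : Set α, M.Indep I ↔ LinearIndepOn K v I

lemma RepOver.exists_isRepresentation {M : Matroid α} (hM : RepOver K M) :
    ∃ (ι : Type) (v : α → ι → K), IsRepresentation K M v := by
  classical
  obtain ⟨ι, v, hv⟩ := hM
  refine ⟨ι, M.E.indicator v, fun I => (hv I).trans ⟨fun ⟨hIE, hI⟩ => ?_, fun hI => ?_⟩⟩
  · exact LinearIndepOn.congr hI fun x hx => (indicator_of_mem (hIE hx) v).symm
  · have hIE : I ⊆ M.E := fun x hx => by_contra fun hxE =>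
      hI.ne_zero hx (indicator_of_notMem hxE v)
    exact ⟨hIE, hI.congr fun x hx => indicator_of_mem (hIE hx) v⟩

namespace IsRepresentation

variable {M : Matroid α} {v : α → W} {v' : α → W'}

lemma mRank_eq (hM : IsRepresentation K M v) {S : Set α} (hS : S.Finite) :
    mRank M S = spanRank K (v '' S) := by
  obtain ⟨I, hI⟩ := M.exists_isBasis' S
  have hIli : LinearIndepOn K v I := (hM I).1 hI.indep
  have hspan : Submodule.span K (v '' S) = Submodule.span K (v '' I) := by
    refine le_antisymm (Submodule.span_le.2 ?_) (Submodule.span_mono (image_mono hI.subset))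
    rintro _ ⟨x, hx, rfl⟩
    by_contra hxI
    have hins : M.Indep (insert x I) := (hM _).2 (hIli.insert hxI)
    exact hxI (Submodule.subset_span (mem_image_of_mem v (hI.mem_of_insert_indep hx hins)))
  rw [mRank_eq_eRk, hI.eRk_eq_encard,
    ← (linearIndepOn_iff_spanRank (hS.subset hI.subset)).1 hIli, spanRank, spanRank, hspan]

lemma apply_eq_zero_iff (hv : IsRepresentation K M v) (hv' : IsRepresentation K M v') (a : α) :
    v a = 0 ↔ v' a = 0 := by
  rw [← not_iff_not]
  exact (linearIndepOn_singleton_iff K).symm.trans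
    ((hv _).symm.trans ((hv' _).trans (linearIndepOn_singleton_iff K)))

lemma comp_of_mRank_image [Finite α] {N : Matroid β} {φ : β → W} (hN : IsRepresentation K N φ)
    {f : α → β} (hf : ∀ S : Set α, mRank N (f '' S) = mRank M S) :
    IsRepresentation K M (φ ∘ f) := fun I => by
  rw [linearIndepOn_iff_spanRank I.toFinite, image_comp, ← hN.mRank_eq (toFinite _), hf,
    mRank_eq_eRk, Matroid.indep_iff_eRk_eq_encard_of_finite I.toFinite]

lemma injective_and_mRank_image_eq [Finite W] {N : Matroid β} {φ : β → W'}
    (hN : IsRepresentation K N φ) {L : W →ₗ[K] W'} (hL : Function.Injective L) {g : W → β}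
    (hg : φ ∘ g = L) : Function.Injective g ∧ ∀ S : Set W, mRank N (g '' S) = spanRank K S := by
  refine ⟨Function.Injective.of_comp (hg ▸ hL), fun S => ?_⟩
  rw [hN.mRank_eq (toFinite _), ← image_comp, hg, spanRank_image_of_injective hL]

end IsRepresentation

/-- The linear matroid of a family of vectors: its independent sets are the index sets of linearly
independent subfamilies. -/
def linearMatroid (K : Type*) [Field K] {α W : Type*} [AddCommGroup W] [Module K W]
    (v : α → W) : Matroid α :=
  IndepMatroid.matroid
    { E := univ
      Indep := LinearIndepOn K v
      indep_empty := linearIndepOn_empty K v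
      indep_subset := fun _ _ hJ hIJ => hJ.mono hIJ
      indep_aug := fun I B hI hImax hB => by
        by_contra! hdep
        have hBI : v '' B ⊆ Submodule.span K (v '' I) := by
          rintro _ ⟨x, hxB, rfl⟩
          by_contra hxI
          exact hdep x ⟨hxB, fun hx => hxI (Submodule.subset_span (mem_image_of_mem v hx))⟩
            (hI.insert hxI)
        have hspan (x : α) : v x ∈ Submodule.span K (v '' I) := by
          refine Submodule.span_le.2 hBI (by_contra fun hxB => hxB (Submodule.subset_span ?_))
          exact mem_image_of_mem v
            (hB.le_of_ge (hB.prop.insert hxB) (subset_insert x B) (mem_insert x B))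
        refine hImax ⟨hI, fun J hJ hIJ x hxJ => ?_⟩
        exact hI.mem_span_iff.1 (hspan x) (hJ.mono (insert_subset hxJ hIJ))
      indep_maximal := fun X _ I hI hIX => by
        obtain ⟨B, hBX, hIB, hXB, hB⟩ := exists_linearIndepOn_extension hI hIX
        refine ⟨B, hIB, ⟨hB, hBX⟩, fun J ⟨hJ, hJX⟩ hBJ x hxJ => ?_⟩
        exact hB.mem_span_iff.1 (hXB (mem_image_of_mem v (hJX hxJ)))
          (hJ.mono (insert_subset hxJ hBJ))
      subset_ground := fun _ _ => subset_univ _ }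

lemma isRepresentation_linearMatroid (v : α → W) : IsRepresentation K (linearMatroid K v) v :=
  fun _ => Iff.rfl

lemma comap_linearMatroid (v : β → W) {f : α → β} (hf : Function.Injective f) :
    (linearMatroid K v).comap f = linearMatroid K (v ∘ f) :=
  Matroid.ext_indep preimage_univ fun _ _ => Matroid.comap_indep_iff.trans
    ⟨fun h => LinearIndepOn.comp_of_image h.1 hf.injOn,
      fun h => ⟨LinearIndepOn.image_of_comp f v h, hf.injOn⟩⟩

lemma mRank_linearMatroid_le_finrank [Finite α] [FiniteDimensional K W] (v : α → W) (S : Set α) :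
    mRank (linearMatroid K v) S ≤ Module.finrank K W := by
  rw [(isRepresentation_linearMatroid v).mRank_eq S.toFinite]
  exact_mod_cast Submodule.finrank_le _

end Representation

section BinaryUniqueness

variable {α W W' : Type*} [AddCommGroup W] [Module (ZMod 2) W]
  [AddCommGroup W'] [Module (ZMod 2) W']

lemma zmod_two_eq_zero_or_one : ∀ x : ZMod 2, x = 0 ∨ x = 1 := by
  decide

lemma sum_zmod_two_smul (C : Finset α) (c : α → ZMod 2) (v : α → W) :
    ∑ i ∈ C, c i • v i = ∑ i ∈ C with c i = 1, v i := by
  rw [Finset.sum_filter]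
  refine Finset.sum_congr rfl fun i _ => ?_
  obtain h | h := zmod_two_eq_zero_or_one (c i) <;> simp [h]

lemma linearIndepOn_zmod_two_iff {v : α → W} {C : Finset α} :
    LinearIndepOn (ZMod 2) v (C : Set α) ↔ ∀ D ⊆ C, ∑ i ∈ D, v i = 0 → D = ∅ := by
  classical
  rw [linearIndepOn_finset_iff]
  refine ⟨fun h D hDC hD => ?_, fun h c hc i hi => ?_⟩
  · have hcoeff := h (fun i => if i ∈ D then 1 else 0) (by simpa [Finset.inter_eq_right.2 hDC])
    exact Finset.eq_empty_of_forall_notMem fun i hi => by simpa [hi] using hcoeff i (hDC hi)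
  · rw [sum_zmod_two_smul] at hc
    have hi1 : c i ≠ 1 := Finset.filter_eq_empty_iff.1 (h _ (Finset.filter_subset _ _) hc) hi
    exact (zmod_two_eq_zero_or_one (c i)).resolve_right hi1

lemma sum_eq_zero_of_forall_ssubset {v : α → W} {v' : α → W'} {C : Finset α}
    (hind : ∀ I : Set α, LinearIndepOn (ZMod 2) v' I → LinearIndepOn (ZMod 2) v I)
    (hC : ∀ D ⊂ C, ∑ i ∈ D, v i = 0 ↔ ∑ i ∈ D, v' i = 0) (hv : ∑ i ∈ C, v i = 0) :
    ∑ i ∈ C, v' i = 0 := by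
  classical
  obtain rfl | hne := C.eq_empty_or_nonempty
  · simp
  have hdep : ¬ LinearIndepOn (ZMod 2) v' (C : Set α) := fun h =>
    hne.ne_empty (linearIndepOn_zmod_two_iff.1 (hind _ h) C Finset.Subset.rfl hv)
  simp only [linearIndepOn_zmod_two_iff, not_forall] at hdep
  obtain ⟨D, hDC, hD', hDne⟩ := hdep
  -- A proper relation `D` of `v'` inside the relation `C` of `v` splits `C` into the smaller sets
  -- `D` and `C \ D`, on which `v` and `v'` have the same relations.
  obtain rfl | hssub := hDC.eq_or_ssubset
  · exact hD'
  have hD : ∑ i ∈ D, v i = 0 := (hC D hssub).2 hD'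
  have hsdiff : ∑ i ∈ C \ D, v i = 0 := by
    rwa [← Finset.sum_sdiff hDC, hD, add_zero] at hv
  have hsdiff' : ∑ i ∈ C \ D, v' i = 0 :=
    (hC _ (Finset.sdiff_ssubset hDC (Finset.nonempty_iff_ne_empty.2 hDne))).1 hsdiff
  rw [← Finset.sum_sdiff hDC, hsdiff', hD', add_zero]

theorem sum_eq_zero_iff_of_linearIndepOn_iff {v : α → W} {v' : α → W'}
    (hind : ∀ I : Set α, LinearIndepOn (ZMod 2) v I ↔ LinearIndepOn (ZMod 2) v' I)
    (C : Finset α) : ∑ i ∈ C, v i = 0 ↔ ∑ i ∈ C, v' i = 0 := by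
  induction C using Finset.strongInduction with
  | H C ih =>
    exact ⟨sum_eq_zero_of_forall_ssubset (fun I => (hind I).2) ih,
      sum_eq_zero_of_forall_ssubset (fun I => (hind I).1) fun D hD => (ih D hD).symm⟩

theorem IsRepresentation.sum_smul_eq_zero_iff [Fintype α] {M : Matroid α} {v : α → W}
    {v' : α → W'} (hv : IsRepresentation (ZMod 2) M v) (hv' : IsRepresentation (ZMod 2) M v')
    (c : α → ZMod 2) : ∑ i, c i • v i = 0 ↔ ∑ i, c i • v' i = 0 := by
  classical
  simp only [sum_zmod_two_smul]
  exact sum_eq_zero_iff_of_linearIndepOn_iff (fun I => (hv I).symm.trans (hv' I)) _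

end BinaryUniqueness

section Path

variable (R : Type*) [Ring R] {ι : Type*} {n : ℕ} (e : ι ≃ Fin n)

/-- The indicator of the labels of the first `k` edges of the path `0 → 1 → ⋯ → n` whose edges are
labelled by `ι` in the order given by `e`. -/
def initialSegment (k : Fin (n + 1)) : ι → R :=
  fun i => if (e i).castSucc < k then 1 else 0

lemma initialSegment_zero : initialSegment R e 0 = 0 := by
  ext i
  simp [initialSegment]

lemma initialSegment_succ [DecidableEq ι] (j : Fin n) :
    initialSegment R e j.succ = initialSegment R e j.castSucc + Pi.single (e.symm j) 1 := by
  ext i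
  simp only [initialSegment, Fin.castSucc_lt_succ_iff, Fin.castSucc_lt_castSucc_iff, Pi.add_apply,
    Pi.single_apply, e.eq_symm_apply, le_iff_lt_or_eq]
  by_cases hij : e i = j <;> simp [hij]

/-- The incidence map of the directed path `0 → 1 → ⋯ → n` whose edges are labelled by `ι` in the
order given by `e`: a label is sent to the head minus the tail of its edge. -/
def pathIncidence [Fintype ι] : (ι → R) →ₗ[R] (Fin (n + 1) → R) :=
  Fintype.linearCombination R fun i => Pi.single (e i).succ 1 - Pi.single (e i).castSucc 1

variable [Fintype ι]

lemma pathIncidence_single [DecidableEq ι] (i : ι) :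
    pathIncidence R e (Pi.single i 1) =
      Pi.single (e i).succ 1 - Pi.single (e i).castSucc 1 := by
  rw [pathIncidence, Fintype.linearCombination_apply_single, one_smul]

lemma pathIncidence_initialSegment (k : Fin (n + 1)) :
    pathIncidence R e (initialSegment R e k) = Pi.single k 1 - Pi.single 0 1 := by
  classical
  induction k using Fin.induction with
  | zero => rw [initialSegment_zero, map_zero, sub_self]
  | succ j ih =>
    rw [initialSegment_succ, map_add, ih, pathIncidence_single, e.apply_symm_apply]
    abel

lemma pathIncidence_injective : Function.Injective (pathIncidence R e) := by
  classical
  refine LinearMap.injective_of_comp_eq_id _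
    (Fintype.linearCombination R (initialSegment R e)) ?_
  refine LinearMap.pi_ext' fun i => LinearMap.ext_ring ?_
  simp [pathIncidence_single, Fintype.linearCombination_apply_single, initialSegment_succ]

end Path

lemma exists_perm_mem_iff_mem {α : Type*} [Finite α] {s t : Finset α} (hst : s.card = t.card) :
    ∃ e : Equiv.Perm α, ∀ a, e a ∈ t ↔ a ∈ s := by
  classical
  let e : {a // a ∈ s} ≃ {a // a ∈ t} := Finset.equivOfCardEq hst
  exact ⟨e.extendSubtype, fun a =>
    ⟨not_imp_not.1 (e.extendSubtype_not_mem a), e.extendSubtype_mem a⟩⟩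

lemma exists_eq_initialSegment {n : ℕ} (w : Fin n → ZMod 2) :
    ∃ (e : Equiv.Perm (Fin n)) (k : Fin (n + 1)), w = initialSegment (ZMod 2) e k := by
  let s : Finset (Fin n) := {i | w i = 1}
  have hs : s.card ≤ n := card_finset_fin_le s
  let t : Finset (Fin n) := {j | j < s.card}
  obtain ⟨e, he⟩ := exists_perm_mem_iff_mem (s := s) (t := t)
    (by rw [Fin.card_filter_val_lt, min_eq_right hs])
  refine ⟨e, ⟨s.card, Nat.lt_succ_of_le hs⟩, funext fun i => ?_⟩
  have hei : (e i : ℕ) < s.card ↔ w i = 1 := by simpa [s, t] using he i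
  obtain h | h := zmod_two_eq_zero_or_one (w i) <;> simp [initialSegment, Fin.lt_def, hei, h]

section Graphic

lemma setOf_single_sub_single_ne_zero {R V : Type*} [Ring R] [Nontrivial R] [DecidableEq V]
    {x y : V} (hxy : x ≠ y) :
    {z | (Pi.single x 1 - Pi.single y 1 : V → R) z ≠ 0} = {x, y} := by
  ext z
  by_cases hzx : z = x <;> by_cases hzy : z = y <;> simp_all

lemma isGraphic_of_injective {α W : Type*} [Finite α] [AddCommGroup W] [Module (ZMod 2) W]
    {V : Type} [Finite V] [DecidableEq V] {M : Matroid α} {v : α → W}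
    (hM : IsRepresentation (ZMod 2) M v) {L : W →ₗ[ZMod 2] (V → ZMod 2)}
    (hL : Function.Injective L)
    (hedge : ∀ a, ∃ x y, L (v a) = Pi.single x 1 - Pi.single y 1) : IsGraphic M := by
  refine ⟨V, Fintype.ofFinite V, L ∘ v, fun S _ => ?_, fun a _ => ?_⟩
  · rw [image_comp, spanRank_image_of_injective hL, hM.mRank_eq S.toFinite]
  · obtain ⟨x, y, hxy⟩ := hedge a
    obtain rfl | hne := eq_or_ne x y
    · exact Or.inl (hxy.trans (sub_self _))
    · refine Or.inr ⟨x, y, hne, ?_⟩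
      rw [Function.comp_apply, hxy, setOf_single_sub_single_ne_zero hne]

/-- The standard basis of `K ^ n` followed by the vector `w`. -/
def basisSnoc {K : Type*} [Field K] {n : ℕ} (w : Fin n → K) : Fin (n + 1) → Fin n → K :=
  Fin.snoc (fun i => Pi.single i 1) w

lemma basisSnoc_castSucc {K : Type*} [Field K] {n : ℕ} (w : Fin n → K) (i : Fin n) :
    basisSnoc w i.castSucc = Pi.single i 1 := by
  rw [basisSnoc, Fin.snoc_castSucc]

lemma basisSnoc_last {K : Type*} [Field K] {n : ℕ} (w : Fin n → K) :
    basisSnoc w (Fin.last n) = w := by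
  rw [basisSnoc, Fin.snoc_last]

lemma isGraphic_linearMatroid_basisSnoc {n : ℕ} (w : Fin n → ZMod 2) :
    IsGraphic (linearMatroid (ZMod 2) (basisSnoc w)) := by
  obtain ⟨e, k, rfl⟩ := exists_eq_initialSegment w
  refine isGraphic_of_injective (isRepresentation_linearMatroid _)
    (pathIncidence_injective (ZMod 2) e) fun i => ?_
  induction i using Fin.lastCases with
  | last => exact ⟨k, 0, by rw [basisSnoc_last, pathIncidence_initialSegment]⟩
  | cast i =>
    exact ⟨(e i).succ, (e i).castSucc, by rw [basisSnoc_castSucc, pathIncidence_single]⟩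

end Graphic

lemma IsRepresentation.apply_last_eq_sum {n : ℕ} {W : Type*} [AddCommGroup W] [Module (ZMod 2) W]
    {w : Fin n → ZMod 2} {v : Fin (n + 1) → W}
    (hv : IsRepresentation (ZMod 2) (linearMatroid (ZMod 2) (basisSnoc w)) v) :
    v (Fin.last n) = ∑ i, w i • v i.castSucc := by
  have hrel := hv.sum_smul_eq_zero_iff (isRepresentation_linearMatroid (basisSnoc w))
    (Fin.snoc w (-1))
  simp only [Fin.sum_univ_castSucc, Fin.snoc_castSucc, Fin.snoc_last, basisSnoc_castSucc,
    basisSnoc_last, neg_one_smul, ← sub_eq_add_neg, sub_eq_zero] at hrel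
  exact (hrel.2 (pi_eq_sum_univ' w).symm).symm

theorem OMMof.exists_injective_mRank_image_eq_spanRank {β : Type*} {n : ℕ} {N : Matroid β}
    {P : (m : ℕ) → Matroid (Fin m) → Prop} (hOMM : OMMof P N) (hN : RepOver (ZMod 2) N)
    (hP : ∀ w : Fin n → ZMod 2, P (n + 1) (linearMatroid (ZMod 2) (basisSnoc w))) :
    ∃ g : (Fin n → ZMod 2) → β, Function.Injective g ∧
      ∀ S : Set (Fin n → ZMod 2), mRank N (g '' S) = spanRank (ZMod 2) S := by
  obtain ⟨ι, φ, hφ⟩ := hN.exists_isRepresentation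
  obtain ⟨f, hrank, hprefix⟩ := hOMM
  let F (w : Fin n → ZMod 2) : Fin (n + 1) → β := f _ (linearMatroid (ZMod 2) (basisSnoc w))
  let b : Fin n → β := f n (linearMatroid (ZMod 2) fun i => (Pi.single i 1 : Fin n → ZMod 2))
  have hFb (w : Fin n → ZMod 2) (i : Fin n) : F w i.castSucc = b i := by
    have hcomp : basisSnoc w ∘ Fin.castLE n.le_succ = fun i => Pi.single i 1 :=
      funext (basisSnoc_castSucc w)
    have hcons := hprefix n (n + 1) n.le_succ _ (hP w) i
    rw [prefixMatroid, comap_linearMatroid _ (Fin.castLE_injective _), hcomp] at hcons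
    exact hcons.symm
  have hF (w : Fin n → ZMod 2) :
      IsRepresentation (ZMod 2) (linearMatroid (ZMod 2) (basisSnoc w)) (φ ∘ F w) :=
    hφ.comp_of_mRank_image fun S => hrank _ _ (hP w) S (subset_univ S)
  let L : (Fin n → ZMod 2) →ₗ[ZMod 2] (ι → ZMod 2) := Fintype.linearCombination _ (φ ∘ b)
  have hL (w : Fin n → ZMod 2) : φ (F w (Fin.last n)) = L w := by
    simpa [hFb, L, Fintype.linearCombination_apply] using (hF w).apply_last_eq_sum
  have hLinj : Function.Injective L := (injective_iff_map_eq_zero L).2 fun w hw => by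
    rw [← basisSnoc_last w, ← (hF w).apply_eq_zero_iff (isRepresentation_linearMatroid _)]
    exact (hL w).trans hw
  exact ⟨fun w => F w (Fin.last n), hφ.injective_and_mRank_image_eq hLinj (funext hL)⟩

theorem stmt8_general {β : Type*} (n : ℕ) (N : Matroid β) (hrep : RepOver (ZMod 2) N)
    (hOMM : OMMof (fun _ M => M.E = univ ∧ IsGraphic M ∧ mRank M univ ≤ (n : ℕ∞)) N) :
    ∃ g : (Fin n → ZMod 2) → β, Function.Injective g ∧
      ∀ S : Set (Fin n → ZMod 2), mRank N (g '' S) = (spanRank (ZMod 2) S : ℕ∞) := by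
  refine hOMM.exists_injective_mRank_image_eq_spanRank hrep fun w =>
    ⟨rfl, isGraphic_linearMatroid_basisSnoc w, ?_⟩
  simpa using mRank_linearMatroid_le_finrank (K := ZMod 2) (basisSnoc w) univ

/-- If `N` is a binary-representable matroid admitting an online matroid embedding of the
class of graphic matroids of rank at most `n` (`n ≥ 1`), then there is an injective
rank-preserving map from the complete binary matroid of rank `n` into `N`. -/
theorem stmt8 {β : Type*} (n : ℕ) (hn : 1 ≤ n) (N : Matroid β)
    (hrep : RepOver (ZMod 2) N)
    (hOME : OMEof (fun _ M => M.E = univ ∧ IsGraphic M ∧ mRank M univ ≤ (n : ℕ∞)) N) :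
    ∃ g : (Fin n → ZMod 2) → β, Function.Injective g ∧
      ∀ S : Set (Fin n → ZMod 2), mRank N (g '' S) = (spanRank (ZMod 2) S : ℕ∞) := by
  obtain ⟨f, -, hf⟩ := hOME
  exact stmt8_general n N hrep ⟨f, hf⟩
end

section
/- There is no regular matroid N (i.e., a matroid representable over every field) for which there exists an online matroid embedding of the class of all graphic matroids into N. -/
open Set

lemma comap_eq_of_mRank_image_eq {α β : Type*} [Finite α] {M : Matroid α} {N : Matroid β}
    {f : α → β} (hM : ∀ e, M.IsNonloop e) (hf : ∀ S, mRank N (f '' S) = mRank M S) :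
    N.comap f = M := by
  have indep_iff (I : Set α) : (N.comap f).Indep I ↔ M.Indep I := by
    rw [Matroid.indep_iff_eRk_eq_encard_of_finite I.toFinite,
      Matroid.indep_iff_eRk_eq_encard_of_finite I.toFinite, Matroid.eRk_comap, ← mRank_eq_eRk, hf,
      mRank_eq_eRk]
  have nonloop (e : α) : (N.comap f).IsNonloop e := by
    rw [← Matroid.indep_singleton, indep_iff, Matroid.indep_singleton]
    exact hM e
  refine Matroid.ext_indep (Set.ext fun e => ?_) fun I _ => indep_iff I
  exact iff_of_true (nonloop e).mem_ground (hM e).mem_ground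

section VectorMatroid

variable {K : Type*} [Field K] {W : Type*} [AddCommGroup W] [Module K W] {α : Type*}

lemma encard_le_encard_of_image_subset_span {v : α → W} {I J : Set α}
    (hI : LinearIndepOn K v I) (hJ : LinearIndepOn K v J)
    (h : v '' J ⊆ Submodule.span K (v '' I)) : J.encard ≤ I.encard := by
  rw [← toENat_rank_span_set hI, ← toENat_rank_span_set hJ]
  exact OrderHomClass.mono Cardinal.toENat (Submodule.rank_mono (Submodule.span_le.2 h))

variable (K) in
/-- The vector matroid of a family of vectors: a set of indices is independent when the
corresponding subfamily is linearly independent. The ground set is the whole index type. -/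
noncomputable def vectorMatroid (v : α → W) : Matroid α :=
  (IndepMatroid.ofFinitaryCardAugment univ (LinearIndepOn K v)
    (linearIndepOn_empty K v) (fun _ _ hJ hIJ => hJ.mono hIJ)
    (by
      intro I J hI hIfin hJ hJfin hlt
      by_contra! hmax
      have hle : J.encard ≤ I.encard → J.ncard ≤ I.ncard := fun h => by
        rwa [← hIfin.cast_ncard_eq, ← hJfin.cast_ncard_eq, Nat.cast_le] at h
      refine hlt.not_ge (hle (encard_le_encard_of_image_subset_span hI hJ ?_))
      rintro _ ⟨e, heJ, rfl⟩
      refine hI.mem_span_iff.2 fun hins => ?_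
      by_contra heI
      exact hmax e heJ heI hins)
    (fun _ h => linearIndepOn_iff_linearIndepOn_finset.2 fun J hJ => h J hJ J.finite_toSet)
    (fun _ _ => subset_univ _)).matroid

@[simp]
lemma vectorMatroid_indep_iff {v : α → W} {I : Set α} :
    (vectorMatroid K v).Indep I ↔ LinearIndepOn K v I := Iff.rfl

lemma vectorMatroid_isNonloop_iff {v : α → W} {e : α} :
    (vectorMatroid K v).IsNonloop e ↔ v e ≠ 0 := by
  rw [← Matroid.indep_singleton, vectorMatroid_indep_iff, linearIndepOn_singleton_iff]

lemma vectorMatroid_eq_freeOn_univ_iff {v : α → W} :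
    vectorMatroid K v = Matroid.freeOn univ ↔ LinearIndependent K v := by
  rw [Matroid.eq_freeOn_iff, vectorMatroid_indep_iff, linearIndepOn_univ_iff]
  exact and_iff_right rfl

lemma linearIndepOn_comp_iff {β : Type*} {v : β → W} {p : α → β} {I : Set α} :
    LinearIndepOn K (v ∘ p) I ↔ LinearIndepOn K v (p '' I) ∧ InjOn p I :=
  ⟨fun h => ⟨h.image_of_comp p v, h.injOn.of_comp⟩, fun h => h.1.comp_of_image h.2⟩

lemma comap_vectorMatroid {β : Type*} (v : β → W) (p : α → β) :
    (vectorMatroid K v).comap p = vectorMatroid K (v ∘ p) :=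
  Matroid.ext_indep rfl fun _ _ => linearIndepOn_comp_iff.symm

lemma vectorMatroid_comp_of_injective {W' : Type*} [AddCommGroup W'] [Module K W']
    {T : W →ₗ[K] W'} (hT : Function.Injective T) (v : α → W) :
    vectorMatroid K (T ∘ v) = vectorMatroid K v :=
  Matroid.ext_indep rfl fun _ _ => T.linearIndepOn_iff_of_injOn hT.injOn

lemma RepOver.exists_comap_eq_vectorMatroid {β : Type*} {N : Matroid β} (hN : RepOver K N) :
    ∃ (ι : Type) (φ : β → ι → K), ∀ {α : Type*} (p : α → β), (N.comap p).E = univ →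
      N.comap p = vectorMatroid K (φ ∘ p) := by
  obtain ⟨ι, φ, hφ⟩ := hN
  refine ⟨ι, φ, fun p hp => Matroid.ext_indep hp fun I _ => ?_⟩
  have hI : p '' I ⊆ N.E := image_subset_iff.2 ((subset_univ I).trans hp.ge)
  rw [Matroid.comap_indep_iff, vectorMatroid_indep_iff, linearIndepOn_comp_iff, hφ,
    and_iff_right hI]
  rfl

lemma span_image_eq_of_isBasis' {v : α → W} {I S : Set α} (hI : (vectorMatroid K v).IsBasis' I S) :
    Submodule.span K (v '' I) = Submodule.span K (v '' S) := by
  refine (Submodule.span_mono (image_mono hI.subset)).antisymm (Submodule.span_le.2 ?_)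
  rintro _ ⟨e, he, rfl⟩
  exact (vectorMatroid_indep_iff.1 hI.indep).mem_span_iff.2 (hI.mem_of_insert_indep he)

lemma spanRank_image_eq_mRank_vectorMatroid [Finite α] (v : α → W) (S : Set α) :
    (spanRank K (v '' S) : ℕ∞) = mRank (vectorMatroid K v) S := by
  obtain ⟨I, hI⟩ := (vectorMatroid K v).exists_isBasis' S
  have := FiniteDimensional.span_of_finite K (S.toFinite.image v)
  calc (spanRank K (v '' S) : ℕ∞)
      = Cardinal.toENat (Module.rank K (Submodule.span K (v '' S))) := by
        rw [spanRank, ← Module.finrank_eq_rank, Cardinal.toENat_nat]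
    _ = I.encard := by
        rw [← span_image_eq_of_isBasis' hI, toENat_rank_span_set hI.indep]
    _ = mRank (vectorMatroid K v) S := by rw [mRank_eq_eRk, hI.eRk_eq_encard]

lemma exists_sum_smul_eq_zero_of_isCircuit {v : α → W} {C : Finset α}
    (hC : (vectorMatroid K v).IsCircuit C) :
    ∃ c : α → K, (∀ i ∈ C, c i ≠ 0) ∧ ∑ i ∈ C, c i • v i = 0 := by
  classical
  obtain ⟨c, hc, i, hi, hci⟩ := not_linearIndepOn_finset_iff.1 hC.not_indep
  have hdep : ¬ LinearIndepOn K v ↑({j ∈ C | c j ≠ 0} : Finset α) := by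
    refine not_linearIndepOn_finset_iff.2 ⟨c, ?_, i, by simp [hi, hci], hci⟩
    rw [← hc]
    exact Finset.sum_filter_of_ne fun j _ hj hcj => hj (by rw [hcj, zero_smul])
  have hsupp : {j ∈ C | c j ≠ 0} = C := Finset.coe_injective <|
    hC.eq_of_not_indep_subset hdep (Finset.coe_subset.2 (Finset.filter_subset _ _))
  exact ⟨c, Finset.filter_eq_self.1 hsupp, hc⟩

lemma exists_eq_sum_smul_of_isCircuit_insert [DecidableEq α] {v : α → W} {k : α} {D : Finset α}
    (hk : k ∉ D) (h : (vectorMatroid K v).IsCircuit ↑(insert k D)) :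
    ∃ c : α → K, (∀ i ∈ D, c i ≠ 0) ∧ v k = ∑ i ∈ D, c i • v i := by
  obtain ⟨c, hc, hsum⟩ := exists_sum_smul_eq_zero_of_isCircuit h
  have hck : c k ≠ 0 := hc k (Finset.mem_insert_self k D)
  refine ⟨fun i => -((c k)⁻¹ * c i), fun i hi => ?_, ?_⟩
  · exact neg_ne_zero.2 (mul_ne_zero (inv_ne_zero hck) (hc i (Finset.mem_insert_of_mem hi)))
  · rw [Finset.sum_insert hk] at hsum
    simp only [neg_smul, mul_smul, Finset.sum_neg_distrib, ← Finset.smul_sum]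
    rw [← smul_neg, ← eq_neg_of_add_eq_zero_left hsum, inv_smul_smul₀ hck]

end VectorMatroid

section Binary

variable {W : Type*} [AddCommGroup W] [Module (ZMod 2) W] {α : Type*}

lemma zmod_two_eq_one_of_ne_zero {a : ZMod 2} (ha : a ≠ 0) : a = 1 :=
  Fin.eq_one_of_ne_zero a ha

lemma linearIndepOn_zmod_two_pair {w : α → W} {i j : α} (hi : w i ≠ 0) (hj : w j ≠ 0)
    (hij : w i ≠ w j) : LinearIndepOn (ZMod 2) w {i, j} := by
  rw [LinearIndepOn.pair_iff w (ne_of_apply_ne w hij)]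
  intro a b hab
  by_cases ha : a = 0 <;> by_cases hb : b = 0 <;>
    simp_all [zmod_two_eq_one_of_ne_zero, ← ZModModule.sub_eq_add, sub_eq_zero]

lemma isCircuit_insert_pair_of_eq_add {w : α → W} {i j k : α} (hi : w i ≠ 0)
    (hj : w j ≠ 0) (hij : w i ≠ w j) (hk : w k = w i + w j) :
    (vectorMatroid (ZMod 2) w).IsCircuit {k, i, j} := by
  have hk₀ : w k ≠ 0 := by rwa [hk, ← ZModModule.sub_eq_add, sub_ne_zero]
  have hki : w k ≠ w i := by simpa [hk]
  have hkj : w k ≠ w j := by simpa [hk]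
  have hdep : ¬ LinearIndepOn (ZMod 2) w {k, i, j} := by
    have hkD : k ∉ ({i, j} : Set α) := by
      rintro (rfl | rfl)
      exacts [hki rfl, hkj rfl]
    rw [linearIndepOn_insert hkD, image_pair, hk]
    exact fun h => h.2 (Submodule.add_mem _ (Submodule.subset_span (by simp))
      (Submodule.subset_span (by simp)))
  refine Matroid.isCircuit_iff_dep_forall_sdiff_singleton_indep.2
    ⟨⟨hdep, subset_univ _⟩, ?_⟩
  rintro e (rfl | rfl | rfl)
  · exact (linearIndepOn_zmod_two_pair hi hj hij).mono (by grind)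
  · exact (linearIndepOn_zmod_two_pair hk₀ hj hkj).mono (by grind)
  · exact (linearIndepOn_zmod_two_pair hk₀ hi hki).mono (by grind)

lemma not_linearIndepOn_zmod_two_iff {w : α → W} {C : Finset α} :
    ¬ LinearIndepOn (ZMod 2) w C ↔ ∃ D ⊆ C, D.Nonempty ∧ ∑ i ∈ D, w i = 0 := by
  classical
  rw [not_linearIndepOn_finset_iff]
  constructor
  · rintro ⟨g, hg, i, hi, hgi⟩
    refine ⟨{i ∈ C | g i ≠ 0}, Finset.filter_subset _ _, ⟨i, by simp [hi, hgi]⟩, ?_⟩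
    rw [← hg, Finset.sum_filter]
    refine Finset.sum_congr rfl fun j _ => ?_
    by_cases hj : g j = 0
    · simp [hj]
    · simp [zmod_two_eq_one_of_ne_zero hj]
  · rintro ⟨D, hDC, ⟨i, hi⟩, hD⟩
    refine ⟨fun j => if j ∈ D then 1 else 0, ?_, i, hDC hi, by simp [hi]⟩
    simpa [ite_smul, Finset.sum_ite_mem, Finset.inter_eq_right.2 hDC] using hD

lemma isCircuit_vectorMatroid_zmod_two {w : α → W} {C : Finset α}
    (hne : C.Nonempty) (hsum : ∑ i ∈ C, w i = 0)
    (hmin : ∀ D ⊂ C, D.Nonempty → ∑ i ∈ D, w i ≠ 0) :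
    (vectorMatroid (ZMod 2) w).IsCircuit C := by
  rw [Matroid.isCircuit_iff_minimal_not_indep (subset_univ _)]
  refine ⟨not_linearIndepOn_zmod_two_iff.2 ⟨C, subset_rfl, hne, hsum⟩, fun I hI hIC => ?_⟩
  lift I to Finset α using C.finite_toSet.subset hIC
  obtain ⟨D, hDI, hDne, hD⟩ := not_linearIndepOn_zmod_two_iff.1 hI
  by_contra hCI
  exact hmin D (hDI.trans_ssubset (Finset.coe_ssubset.1 ⟨hIC, hCI⟩)) hDne hD

lemma eq_sum_of_vectorMatroid_zmod_two_eq {W' : Type*} [AddCommGroup W'] [Module (ZMod 2) W']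
    [DecidableEq α] {v : α → W} {w : α → W'}
    (h : vectorMatroid (ZMod 2) v = vectorMatroid (ZMod 2) w) (k : α) (D : Finset α) (hk : k ∉ D)
    (hsum : ∑ i ∈ insert k D, v i = 0)
    (hmin : ∀ E ⊂ insert k D, E.Nonempty → ∑ i ∈ E, v i ≠ 0) : w k = ∑ i ∈ D, w i := by
  have hC := isCircuit_vectorMatroid_zmod_two (Finset.insert_nonempty k D) hsum hmin
  rw [h] at hC
  obtain ⟨c, hc, hwk⟩ := exists_eq_sum_smul_of_isCircuit_insert hk hC
  refine hwk.trans (Finset.sum_congr rfl fun i hi => ?_)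
  rw [zmod_two_eq_one_of_ne_zero (hc i hi), one_smul]

end Binary

section Graph

variable {V : Type*} [DecidableEq V] {α : Type*}

/-- The incidence vector over `𝔽₂` of an edge given by its two end vertices. A loop gets the
zero vector. -/
def incidenceVector (e : V × V) : V → ZMod 2 :=
  Pi.single e.1 1 + Pi.single e.2 1

/-- The cycle matroid of a graph given by its family of edges, as a vector matroid. -/
noncomputable def cycleMatroid (G : α → V × V) : Matroid α :=
  vectorMatroid (ZMod 2) (incidenceVector ∘ G)

lemma incidenceVector_eq_zero_iff {e : V × V} : incidenceVector e = 0 ↔ e.1 = e.2 := by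
  refine ⟨fun h => by_contra fun hne => ?_, fun h => ?_⟩
  · simpa [incidenceVector, Pi.single_apply, hne] using congr_fun h e.1
  · rw [incidenceVector, h, ZModModule.add_self]

lemma cycleMatroid_isNonloop_iff {G : α → V × V} {e : α} :
    (cycleMatroid G).IsNonloop e ↔ (G e).1 ≠ (G e).2 := by
  rw [cycleMatroid, vectorMatroid_isNonloop_iff, Function.comp_apply, Ne,
    incidenceVector_eq_zero_iff]

lemma incidenceVector_eq_zero_or_support_eq_pair (e : V × V) :
    incidenceVector e = 0 ∨ ∃ u v, u ≠ v ∧ {w | incidenceVector e w ≠ 0} = {u, v} := by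
  refine or_iff_not_imp_left.2 fun he => ⟨e.1, e.2, mt incidenceVector_eq_zero_iff.2 he, ?_⟩
  rw [incidenceVector_eq_zero_iff] at he
  ext w
  by_cases h₁ : w = e.1 <;> by_cases h₂ : w = e.2 <;> simp_all [incidenceVector, Pi.single_apply]

lemma isGraphic_cycleMatroid {V : Type} [Finite V] [DecidableEq V] [Finite α] (G : α → V × V) :
    IsGraphic (cycleMatroid G) :=
  ⟨V, Fintype.ofFinite V, incidenceVector ∘ G,
    fun S _ => spanRank_image_eq_mRank_vectorMatroid (incidenceVector ∘ G) S,
    fun e _ => incidenceVector_eq_zero_or_support_eq_pair (G e)⟩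

lemma prefixMatroid_cycleMatroid {k m : ℕ} (h : k ≤ m) (G : Fin m → V × V) :
    prefixMatroid h (cycleMatroid G) = cycleMatroid (G ∘ Fin.castLE h) :=
  comap_vectorMatroid _ _

/-- The edges of the complete graph `K₄`, beginning with the star at vertex `0`. -/
def k4Edges : Fin 6 → Fin 4 × Fin 4 := ![(0, 1), (0, 2), (0, 3), (1, 2), (1, 3), (2, 3)]

/-- The edges of the 4-cycle, in cyclic order. -/
def c4Edges : Fin 4 → Fin 4 × Fin 4 := ![(0, 1), (1, 2), (2, 3), (3, 0)]

lemma prefixMatroid_cycleMatroid_k4Edges :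
    prefixMatroid (by decide) (cycleMatroid k4Edges) = (Matroid.freeOn univ : Matroid (Fin 3)) := by
  rw [prefixMatroid_cycleMatroid, cycleMatroid, vectorMatroid_eq_freeOn_univ_iff,
    Fintype.linearIndependent_iff]
  decide

lemma prefixMatroid_cycleMatroid_c4Edges :
    prefixMatroid (by decide) (cycleMatroid c4Edges) = (Matroid.freeOn univ : Matroid (Fin 3)) := by
  rw [prefixMatroid_cycleMatroid, cycleMatroid, vectorMatroid_eq_freeOn_univ_iff,
    Fintype.linearIndependent_iff]
  decide

variable {W : Type*} [AddCommGroup W] [Module (ZMod 2) W]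

lemma eq_add_of_cycleMatroid_k4Edges_eq {w : Fin 6 → W}
    (h : cycleMatroid k4Edges = vectorMatroid (ZMod 2) w) :
    w 3 = w 0 + w 1 ∧ w 4 = w 0 + w 2 ∧ w 5 = w 1 + w 2 := by
  have edge_eq := eq_sum_of_vectorMatroid_zmod_two_eq h
  exact ⟨by simpa using edge_eq 3 {0, 1} (by decide) (by decide) (by decide),
    by simpa using edge_eq 4 {0, 2} (by decide) (by decide) (by decide),
    by simpa using edge_eq 5 {1, 2} (by decide) (by decide) (by decide)⟩

lemma eq_add_add_of_cycleMatroid_c4Edges_eq {w : Fin 4 → W}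
    (h : cycleMatroid c4Edges = vectorMatroid (ZMod 2) w) : w 3 = w 0 + w 1 + w 2 := by
  simpa [add_assoc] using eq_sum_of_vectorMatroid_zmod_two_eq h 3 {0, 1, 2} (by decide)
    (by decide) (by decide)

end Graph

section Fano

/-- The points of the Fano plane: the nonzero vectors of `𝔽₂³`, beginning with the standard
basis. -/
def fanoPoint : Fin 7 → Fin 3 → ZMod 2 :=
  ![![1, 0, 0], ![0, 1, 0], ![0, 0, 1], ![1, 1, 0], ![1, 0, 1], ![0, 1, 1], ![1, 1, 1]]

/-- The Fano matroid, whose three-element circuits are the lines of the Fano plane. -/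
noncomputable def fanoMatroid : Matroid (Fin 7) := vectorMatroid (ZMod 2) fanoPoint

lemma vectorMatroid_eq_fanoMatroid {W : Type*} [AddCommGroup W] [Module (ZMod 2) W]
    {v : Fin 7 → W} (hv : LinearIndependent (ZMod 2) (v ∘ Fin.castLE (by decide : 3 ≤ 7)))
    (h₃ : v 3 = v 0 + v 1) (h₄ : v 4 = v 0 + v 2) (h₅ : v 5 = v 1 + v 2)
    (h₆ : v 6 = v 0 + v 1 + v 2) : vectorMatroid (ZMod 2) v = fanoMatroid := by
  let T := Fintype.linearCombination (ZMod 2) (v ∘ Fin.castLE (by decide : 3 ≤ 7))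
  have hv_eq : v = T ∘ fanoPoint := by
    ext1 i
    fin_cases i <;> simp [T, Fintype.linearCombination_apply, Fin.sum_univ_three, fanoPoint, *]
  rw [hv_eq, vectorMatroid_comp_of_injective hv.fintypeLinearCombination_injective, fanoMatroid]

variable {K : Type*} [Field K] {W : Type*} [AddCommGroup W] [Module K W] {v : Fin 7 → W}

lemma linearIndependent_of_fanoMatroid_eq (h : fanoMatroid = vectorMatroid K v) :
    LinearIndependent K (v ∘ Fin.castLE (by decide : 3 ≤ 7)) := by
  rw [← vectorMatroid_eq_freeOn_univ_iff, ← comap_vectorMatroid, ← h, fanoMatroid,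
    comap_vectorMatroid, vectorMatroid_eq_freeOn_univ_iff, Fintype.linearIndependent_iff]
  decide

lemma fanoPoint_ne_zero : ∀ i, fanoPoint i ≠ 0 := by decide

lemma fanoPoint_injective : Function.Injective fanoPoint := by decide

lemma exists_eq_smul_add_smul_of_fanoMatroid_eq (h : fanoMatroid = vectorMatroid K v)
    (i j k : Fin 7) (hij : i ≠ j) (hk : fanoPoint k = fanoPoint i + fanoPoint j) :
    ∃ a b : K, a ≠ 0 ∧ b ≠ 0 ∧ v k = a • v i + b • v j := by
  have hline : fanoMatroid.IsCircuit ↑(insert k {i, j} : Finset (Fin 7)) := by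
    simpa [fanoMatroid] using isCircuit_insert_pair_of_eq_add (fanoPoint_ne_zero i)
      (fanoPoint_ne_zero j) (fanoPoint_injective.ne hij) hk
  have hkD : k ∉ ({i, j} : Finset (Fin 7)) := by
    simp only [Finset.mem_insert, Finset.mem_singleton, not_or]
    constructor <;> rintro rfl <;> simp [fanoPoint_ne_zero] at hk
  obtain ⟨c, hc, hsum⟩ := exists_eq_sum_smul_of_isCircuit_insert hkD (h ▸ hline)
  rw [Finset.sum_pair hij] at hsum
  exact ⟨c i, c j, hc i (by simp), hc j (by simp), hsum⟩

lemma eq_coords_of_fanoMatroid_eq (h : fanoMatroid = vectorMatroid K v) {x y z x' y' z' : K}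
    (heq : x • v 0 + y • v 1 + z • v 2 = x' • v 0 + y' • v 1 + z' • v 2) :
    x = x' ∧ y = y' ∧ z = z' := by
  have hcoords := (linearIndependent_of_fanoMatroid_eq h).eq_coords_of_eq (f := ![x, y, z])
    (g := ![x', y', z']) (by simpa [Fin.sum_univ_three] using heq)
  exact ⟨hcoords 0, hcoords 1, hcoords 2⟩

lemma two_eq_zero_of_fanoMatroid_eq (h : fanoMatroid = vectorMatroid K v) : (2 : K) = 0 := by
  have line := exists_eq_smul_add_smul_of_fanoMatroid_eq h
  obtain ⟨a₀, a₁, ha₀, ha₁, h₃⟩ := line 0 1 3 (by decide) (by decide)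
  obtain ⟨b₀, b₂, -, hb₂, h₄⟩ := line 0 2 4 (by decide) (by decide)
  obtain ⟨c₁, c₂, -, -, h₅⟩ := line 1 2 5 (by decide) (by decide)
  obtain ⟨m, n, -, -, h₅'⟩ := line 3 4 5 (by decide) (by decide)
  obtain ⟨q, p, hq, -, h₆⟩ := line 3 2 6 (by decide) (by decide)
  obtain ⟨s, r, -, -, h₆'⟩ := line 4 1 6 (by decide) (by decide)
  obtain ⟨u, t, -, -, h₆''⟩ := line 5 0 6 (by decide) (by decide)
  obtain ⟨h₅₀, h₅₁, h₅₂⟩ : 0 = m * a₀ + n * b₀ ∧ c₁ = m * a₁ ∧ c₂ = n * b₂ :=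
    eq_coords_of_fanoMatroid_eq h <| by
      linear_combination (norm := module) h₅' - h₅ + m • h₃ + n • h₄
  obtain ⟨h₆₀, -, h₆₂⟩ : q * a₀ = s * b₀ ∧ q * a₁ = r ∧ p = s * b₂ :=
    eq_coords_of_fanoMatroid_eq h <| by
      linear_combination (norm := module) h₆' - h₆ + s • h₄ - q • h₃
  obtain ⟨-, h₆₁, h₆₂'⟩ : q * a₀ = t ∧ q * a₁ = u * c₁ ∧ p = u * c₂ :=
    eq_coords_of_fanoMatroid_eq h <| by
      linear_combination (norm := module) h₆'' - h₆ + u • h₅ - q • h₃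
  have hqu : q = u * m := mul_right_cancel₀ ha₁ (by rw [h₆₁, h₅₁, mul_assoc])
  have hsu : s = u * n := mul_right_cancel₀ hb₂ (by rw [← h₆₂, h₆₂', h₅₂, mul_assoc])
  have htwo : 2 * (q * a₀) = 0 :=
    calc 2 * (q * a₀) = q * a₀ + s * b₀ := by rw [← h₆₀, two_mul]
      _ = u * (m * a₀ + n * b₀) := by rw [hqu, hsu]; ring
      _ = 0 := by rw [← h₅₀, mul_zero]
  exact (mul_eq_zero.1 htwo).resolve_right (mul_ne_zero hq ha₀)

end Fano

section OnlineMorphism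

variable {β : Type*} {N : Matroid β}

lemma OMEof.ommof {P : (m : ℕ) → Matroid (Fin m) → Prop} (h : OMEof P N) : OMMof P N := by
  obtain ⟨f, -, hrank, hprefix⟩ := h
  exact ⟨f, hrank, hprefix⟩

lemma exists_comap_eq_fanoMatroid (hN : RepOver (ZMod 2) N) {a : Fin 6 → β} {b : Fin 4 → β}
    (ha : N.comap a = cycleMatroid k4Edges) (hb : N.comap b = cycleMatroid c4Edges)
    (hab : ∀ i : Fin 3, a (Fin.castLE (by decide) i) = b (Fin.castLE (by decide) i)) :
    ∃ p : Fin 7 → β, N.comap p = fanoMatroid := by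
  obtain ⟨ι, φ, hφ⟩ := hN.exists_comap_eq_vectorMatroid
  have hk4 : cycleMatroid k4Edges = vectorMatroid (ZMod 2) (φ ∘ a) := ha ▸ hφ a (by rw [ha]; rfl)
  have hc4 : cycleMatroid c4Edges = vectorMatroid (ZMod 2) (φ ∘ b) := hb ▸ hφ b (by rw [hb]; rfl)
  obtain ⟨h₃, h₄, h₅⟩ := eq_add_of_cycleMatroid_k4Edges_eq hk4
  have h₆ : φ (b 3) = φ (a 0) + φ (a 1) + φ (a 2) := by
    rw [show a 0 = b 0 from hab 0, show a 1 = b 1 from hab 1, show a 2 = b 2 from hab 2]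
    exact eq_add_add_of_cycleMatroid_c4Edges_eq hc4
  have hstar : LinearIndependent (ZMod 2) (φ ∘ a ∘ Fin.castLE (by decide : 3 ≤ 6)) := by
    rw [← Function.comp_assoc, ← vectorMatroid_eq_freeOn_univ_iff, ← comap_vectorMatroid, ← hk4]
    exact prefixMatroid_cycleMatroid_k4Edges
  let p : Fin 7 → β := Fin.snoc a (b 3)
  have hstar' : p ∘ Fin.castLE (by decide : 3 ≤ 7) = a ∘ Fin.castLE (by decide) := by
    ext1 i
    fin_cases i <;> rfl
  have hground : (N.comap p).E = univ := by
    have ha' (i : Fin 6) : a i ∈ N.E := (Set.ext_iff.1 (congrArg Matroid.E ha) i).2 trivial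
    have hb' (i : Fin 4) : b i ∈ N.E := (Set.ext_iff.1 (congrArg Matroid.E hb) i).2 trivial
    exact eq_univ_of_forall (Fin.lastCases (hb' 3) fun i => by simpa [p] using ha' i)
  refine ⟨p, (hφ p hground).trans (vectorMatroid_eq_fanoMatroid ?_ h₃ h₄ h₅ h₆)⟩
  rwa [Function.comp_assoc, hstar']

lemma OMMof.exists_comap_eq_cycleMatroid (h : OMMof (fun _ M => M.E = univ ∧ IsGraphic M) N) :
    ∃ (a : Fin 6 → β) (b : Fin 4 → β), N.comap a = cycleMatroid k4Edges ∧
      N.comap b = cycleMatroid c4Edges ∧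
      ∀ i : Fin 3, a (Fin.castLE (by decide) i) = b (Fin.castLE (by decide) i) := by
  obtain ⟨f, hrank, hprefix⟩ := h
  have comap_eq {m n : ℕ} {G : Fin m → Fin n × Fin n} (hG : ∀ e, (G e).1 ≠ (G e).2) :
      N.comap (f m (cycleMatroid G)) = cycleMatroid G :=
    comap_eq_of_mRank_image_eq (fun e => cycleMatroid_isNonloop_iff.2 (hG e))
      fun S => hrank m _ ⟨rfl, isGraphic_cycleMatroid G⟩ S (subset_univ S)
  refine ⟨f 6 (cycleMatroid k4Edges), f 4 (cycleMatroid c4Edges), comap_eq (by decide),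
    comap_eq (by decide), fun i => ?_⟩
  rw [← hprefix 3 6 _ _ ⟨rfl, isGraphic_cycleMatroid k4Edges⟩,
    ← hprefix 3 4 _ _ ⟨rfl, isGraphic_cycleMatroid c4Edges⟩, prefixMatroid_cycleMatroid_k4Edges,
    prefixMatroid_cycleMatroid_c4Edges]

end OnlineMorphism

theorem stmt9_general {β : Type*} (N : Matroid β) {K : Type*} [Field K] (hK : (2 : K) ≠ 0)
    (h₂ : RepOver (ZMod 2) N) (hN : RepOver K N) :
    ¬ OMMof (fun _ M => M.E = univ ∧ IsGraphic M) N := by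
  intro h
  obtain ⟨a, b, ha, hb, hab⟩ := h.exists_comap_eq_cycleMatroid
  obtain ⟨p, hp⟩ := exists_comap_eq_fanoMatroid h₂ ha hb hab
  obtain ⟨ι, φ, hφ⟩ := hN.exists_comap_eq_vectorMatroid
  exact hK (two_eq_zero_of_fanoMatroid_eq (hp.symm.trans (hφ p (by rw [hp]; rfl))))

/-- There is no regular matroid `N` (a matroid representable over every field) admitting an
online matroid embedding of the class of all graphic matroids. -/
theorem stmt9 (β : Type*) (N : Matroid β)
    (hreg : ∀ (K : Type) [Field K], RepOver K N) :
    ¬ OMEof (fun _ M => M.E = univ ∧ IsGraphic M) N :=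
  fun h => stmt9_general N two_ne_zero (hreg (ZMod 2)) (hreg ℚ) h.ommof
end

section
/- Let n be a natural number and let F be a field with at least 2ⁿ elements. Then there is an online matroid morphism from the class of laminar matroids with at most n elements into the complete F-linear matroid of rank n (the matroid on the ground set Fⁿ = (Fin n → F) in which the rank of a set S of vectors is the dimension of its F-linear span). -/
open Set

/-- A family of sets is laminar if any two of its members are disjoint or nested. -/
def IsLaminarFamily {γ : Type*} (𝒜 : Set (Set γ)) : Prop :=
  ∀ A ∈ 𝒜, ∀ B ∈ 𝒜, A ∩ B = ∅ ∨ A \ B = ∅ ∨ B \ A = ∅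

/-- A matroid is laminar if its independent sets are exactly the subsets of the ground set
obeying cardinality constraints over a laminar family of subsets of the ground set. -/
def IsLaminar {γ : Type*} (M : Matroid γ) : Prop :=
  ∃ (𝒜 : Set (Set γ)) (c : Set γ → ℕ), IsLaminarFamily 𝒜 ∧ (∀ A ∈ 𝒜, A ⊆ M.E) ∧
    ∀ I : Set γ, M.Indep I ↔ (I ⊆ M.E ∧ ∀ A ∈ 𝒜, (I ∩ A).encard ≤ (c A : ℕ∞))

/-!
In a laminar matroid the constraint sets containing an element `e` form a chain, so relative to any
set `X` not containing `e`, either `e` is a coloop of `X ∪ {e}` or `e` is placed freely on a flat of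
`X`: the arrival of `e` is a principal extension. A principal extension is represented by a generic
vector of the span `W` of that flat, or of the whole space for a coloop. With `m` earlier elements,
generic means avoiding the at most `2 ^ m` spans of earlier vectors that do not contain `W`, and a
vector space over a field with more than `2 ^ m` elements is not the union of `2 ^ m` proper
subspaces. The choice depends only on the elements seen so far, so it can be made online.
-/

section Laminar

variable {α β : Type*} {M : Matroid α} {A I X : Set α} {e : α}

/-- The relation "`e` is added to `X` by a principal extension": in the restriction of `M` to
`X ∪ {e}`, either `e` is a coloop (or lies outside the ground set), or `e` is placed freely on the
flat spanned by some `A ⊆ X`. -/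
def IsPrincipalOver (M : Matroid α) (X : Set α) (e : α) : Prop :=
  e ∉ M.closure X ∨ ∃ A ⊆ X, ∀ S ⊆ X, e ∈ M.closure S ↔ A ⊆ M.closure S

lemma IsPrincipalOver.comap {N : Matroid β} {f : α → β} (h : IsPrincipalOver N (f '' X) (f e)) :
    IsPrincipalOver (N.comap f) X e := by
  refine h.imp (by simp) ?_
  rintro ⟨A, hA, hAS⟩
  obtain ⟨B, hB, rfl⟩ := subset_image_iff.1 hA
  refine ⟨B, hB, fun S hS ↦ ?_⟩
  simpa using hAS (f '' S) (image_mono hS)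

lemma IsLaminarFamily.subset_or_subset {𝒜 : Set (Set α)} {B : Set α} (h : IsLaminarFamily 𝒜)
    (hA : A ∈ 𝒜) (hB : B ∈ 𝒜) (heA : e ∈ A) (heB : e ∈ B) : A ⊆ B ∨ B ⊆ A :=
  (h A hA B hB).elim (fun h ↦ (h.le ⟨heA, heB⟩).elim) (.imp sdiff_eq_empty.1 sdiff_eq_empty.1)

lemma subset_closure_of_encard_inter_le {k : ℕ} (hAE : A ⊆ M.E)
    (hk : ∀ J, M.Indep J → (J ∩ A).encard ≤ k) (hI : M.Indep I) (hIA : I ⊆ A)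
    (hkI : k ≤ I.encard) : A ⊆ M.closure I := by
  intro a ha
  refine hI.mem_closure_iff'.2 ⟨hAE ha, fun hins ↦ by_contra fun haI ↦ ?_⟩
  have hle : I.encard + 1 ≤ k := by
    rw [← encard_insert_of_notMem haI, ← inter_eq_left.2 (insert_subset ha hIA)]
    exact hk _ hins
  have hsucc : ((k + 1 : ℕ) : ℕ∞) ≤ k := by
    push_cast
    exact (add_le_add_left hkI 1).trans hle
  exact absurd (Nat.cast_le.1 hsucc) k.not_succ_le_self

lemma exists_tight_of_mem_closure {𝒜 : Set (Set α)} {c : Set α → ℕ}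
    (hM : ∀ I, M.Indep I ↔ I ⊆ M.E ∧ ∀ A ∈ 𝒜, (I ∩ A).encard ≤ (c A : ℕ∞))
    (heX : e ∉ X) (he : e ∈ M.closure X) :
    ∃ A ∈ 𝒜, e ∈ A ∧ ∃ I ⊆ X, M.Indep I ∧ I ⊆ A ∧ c A ≤ I.encard := by
  obtain ⟨I, hIX⟩ := M.exists_isBasis' X
  have heI : e ∉ I := fun h ↦ heX (hIX.subset h)
  rw [← hIX.closure_eq_closure, hIX.indep.mem_closure_iff_of_notMem heI] at he
  obtain ⟨A, hA, hlt⟩ : ∃ A ∈ 𝒜, c A < (insert e I ∩ A).encard := by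
    by_contra! hle
    exact he.not_indep ((hM _).2 ⟨he.subset_ground, hle⟩)
  have heA : e ∈ A := by
    by_contra heA
    rw [insert_inter_of_notMem heA] at hlt
    exact hlt.not_ge (((hM I).1 hIX.indep).2 A hA)
  rw [insert_inter_of_mem heA, encard_insert_of_notMem fun h ↦ heI h.1] at hlt
  exact ⟨A, hA, heA, I ∩ A, inter_subset_left.trans hIX.subset,
    hIX.indep.subset inter_subset_left, inter_subset_right, Order.le_of_lt_add_one hlt⟩

-- The constraint sets through `e` form a chain, and `e` is placed freely on the one of least
-- capacity among those that an independent subset of `X` saturates.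
theorem IsLaminar.isPrincipalOver (hM : IsLaminar M) (heX : e ∉ X) : IsPrincipalOver M X e := by
  obtain ⟨𝒜, c, hlam, h𝒜E, hindep⟩ := hM
  have subset_closure {A I : Set α} (hA : A ∈ 𝒜) :
      M.Indep I → I ⊆ A → c A ≤ I.encard → A ⊆ M.closure I :=
    subset_closure_of_encard_inter_le (h𝒜E A hA) fun J hJ ↦ ((hindep J).1 hJ).2 A hA
  by_cases he : e ∈ M.closure X
  swap
  · exact .inl he
  obtain ⟨A, ⟨hA, heA, I, hIX, hI, hIA, hcI⟩, hmin⟩ := exists_minimalFor_of_wellFoundedLT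
    (fun A ↦ A ∈ 𝒜 ∧ e ∈ A ∧ ∃ I ⊆ X, M.Indep I ∧ I ⊆ A ∧ c A ≤ I.encard) c
    (exists_tight_of_mem_closure hindep heX he)
  refine .inr ⟨I, hIX, fun S hSX ↦ ⟨fun heS ↦ ?_, fun hIS ↦ ?_⟩⟩
  · obtain ⟨B, hB, heB, J, hJS, hJ, hJB, hcJ⟩ :=
      exists_tight_of_mem_closure hindep (fun h ↦ heX (hSX h)) heS
    suffices A ⊆ M.closure J from hIA.trans (this.trans (M.closure_subset_closure hJS))
    rcases hlam.subset_or_subset hA hB heA heB with hAB | hBA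
    · exact hAB.trans (subset_closure hB hJ hJB hcJ)
    · have hcAB : c A ≤ c B :=
        (le_total (c A) (c B)).elim id (hmin ⟨hB, heB, J, hJS.trans hSX, hJ, hJB, hcJ⟩)
      exact subset_closure hA hJ (hJB.trans hBA) ((Nat.cast_le.2 hcAB).trans hcJ)
  · exact M.closure_subset_closure_of_subset_closure hIS (subset_closure hA hI hIA hcI heA)

end Laminar

/-- The vectors `v` represent the matroid `M` over `K` on the set `X`: a subset of `X` is
independent in `M` exactly when its vectors are linearly independent. Nothing is required of `v`
outside `X`, so that a representation can be built up one element at a time. -/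
def RepresentsOn (K : Type*) [DivisionRing K] {V α : Type*} [AddCommGroup V] [Module K V]
    (M : Matroid α) (v : α → V) (X : Set α) : Prop :=
  ∀ ⦃I⦄, I ⊆ X → (M.Indep I ↔ LinearIndepOn K v I)

namespace RepresentsOn

section DivisionRing

variable {K V α β : Type*} [DivisionRing K] [AddCommGroup V] [Module K V] {M : Matroid α}
  {v : α → V} {X S : Set α}

lemma image_of_comap {N : Matroid β} {f : α → β} {w : β → V} (hf : InjOn f X)
    (h : RepresentsOn K (N.comap f) (w ∘ f) X) : RepresentsOn K N w (f '' X) := by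
  intro J hJ
  obtain ⟨I, hI, rfl⟩ := subset_image_iff.1 hJ
  have hfI : InjOn f I := hf.mono hI
  calc N.Indep (f '' I) ↔ (N.comap f).Indep I := by simp [hfI]
    _ ↔ LinearIndepOn K (w ∘ f) I := h hI
    _ ↔ LinearIndepOn K w (f '' I) := ⟨.image_of_comp f w, fun hli ↦ hli.comp_of_image hfI⟩

lemma span_image_eq_of_isBasis {I : Set α} (h : RepresentsOn K M v X) (hSX : S ⊆ X)
    (hIS : M.IsBasis I S) : Submodule.span K (v '' I) = Submodule.span K (v '' S) := by
  refine le_antisymm (Submodule.span_mono (image_mono hIS.subset)) (Submodule.span_le.2 ?_)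
  rintro _ ⟨b, hb, rfl⟩
  have hIX : I ⊆ X := hIS.subset.trans hSX
  refine ((h hIX).1 hIS.indep).mem_span_iff.2 fun hins ↦ ?_
  exact hIS.mem_of_insert_indep hb ((h (insert_subset (hSX hb) hIX)).2 hins)

lemma mem_closure_iff (h : RepresentsOn K M v X) (hXE : X ⊆ M.E) (hSX : S ⊆ X) {a : α}
    (ha : a ∈ X) : a ∈ M.closure S ↔ v a ∈ Submodule.span K (v '' S) := by
  obtain ⟨I, hIS⟩ := M.exists_isBasis S (hSX.trans hXE)
  have hIX : I ⊆ X := hIS.subset.trans hSX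
  rw [← hIS.closure_eq_closure, ← h.span_image_eq_of_isBasis hSX hIS, hIS.indep.mem_closure_iff',
    ((h hIX).1 hIS.indep).mem_span_iff, h (insert_subset ha hIX), and_iff_right (hXE ha)]

lemma update [DecidableEq α] {e : α} {w : V} (h : RepresentsOn K M v X) (heE : e ∈ M.E)
    (heX : e ∉ X) (hw : ∀ S ⊆ X, e ∈ M.closure S ↔ w ∈ Submodule.span K (v '' S)) :
    RepresentsOn K M (Function.update v e w) (insert e X) := by
  have heq : EqOn (Function.update v e w) v X := fun x hx ↦
    Function.update_of_ne (ne_of_mem_of_not_mem hx heX) _ _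
  intro I hI
  rcases subset_insert_iff.1 hI with hIX | ⟨heI, hIX⟩
  · rw [h hIX, linearIndepOn_congr (heq.mono hIX)]
  · rw [← insert_sdiff_self_of_mem heI, M.insert_indep_iff, linearIndepOn_insert (by simp), h hIX,
      linearIndepOn_congr (heq.mono hIX), (heq.mono hIX).image_eq, Function.update_self,
      ← hw _ hIX]
    simp [heE]

end DivisionRing

lemma spanRank_image {K V α : Type*} [Field K] [AddCommGroup V] [Module K V] {M : Matroid α}
    {v : α → V} {X S : Set α} (h : RepresentsOn K M v X) (hXE : X ⊆ M.E) (hSX : S ⊆ X)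
    (hS : S.Finite) : (spanRank K (v '' S) : ℕ∞) = mRank M S := by
  obtain ⟨I, hIS⟩ := M.exists_isBasis S (hSX.trans hXE)
  have hli : LinearIndepOn K v I := (h (hIS.subset.trans hSX)).1 hIS.indep
  rw [mRank_eq_eRk, hIS.eRk_eq_encard, spanRank, ← h.span_image_eq_of_isBasis hSX hIS,
    Module.finrank, ← Cardinal.toNat_toENat, toENat_rank_span_set hli,
    ENat.natCast_toNat (hS.subset hIS.subset).encard_lt_top.ne]

end RepresentsOn

section GenericVector

variable {K V : Type*} [Field K] [AddCommGroup V] [Module K V]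

lemma exists_forall_mem_iff_le {ι : Type*} (W : Submodule K V) (U : ι → Submodule K V)
    (hK : ENat.card ι < ENat.card K) : ∃ w, ∀ i, w ∈ U i ↔ W ≤ U i := by
  have : Finite ι := ENat.card_lt_top.1 (hK.trans_le le_top)
  let Bad := {i // ¬ W ≤ U i}
  have : Fintype Bad := Fintype.ofFinite Bad
  have hBad : (Finset.univ : Finset Bad).card < ENat.card K := by
    rw [Finset.card_univ, ← ENat.card_eq_coe_fintype_card]
    exact (ENat.card_le_card_of_injective Subtype.val_injective).trans_lt hK
  have hne := (Submodule.iUnion_ssubset_of_forall_ne_top_of_card_lt Finset.univ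
    (fun i : Bad ↦ (U i).comap W.subtype)
    (fun i ↦ Submodule.comap_subtype_eq_top.not.2 i.2) hBad).ne
  obtain ⟨w, hw⟩ := (ne_univ_iff_exists_notMem _).1 hne
  refine ⟨w, fun i ↦ ⟨fun hwi ↦ by_contra fun hi ↦ hw ?_, fun hi ↦ hi w.2⟩⟩
  exact mem_iUnion₂.2 ⟨⟨i, hi⟩, Finset.mem_univ _, hwi⟩

lemma exists_forall_mem_span_image_iff_le {α : Type*} {X : Set α} (hX : X.Finite) (v : α → V)
    (W : Submodule K V) (hK : ((2 ^ X.ncard : ℕ) : ℕ∞) < ENat.card K) :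
    ∃ w, ∀ S ⊆ X, w ∈ Submodule.span K (v '' S) ↔ W ≤ Submodule.span K (v '' S) := by
  have hcard : ENat.card (𝒫 X) < ENat.card K := by
    rwa [← ncard_powerset X hX, hX.powerset.cast_ncard_eq] at hK
  obtain ⟨w, hw⟩ := exists_forall_mem_iff_le W (fun S : 𝒫 X ↦ Submodule.span K (v '' S)) hcard
  exact ⟨w, fun S hS ↦ hw ⟨S, hS⟩⟩

lemma not_top_le_span_image {α : Type*} {X : Set α} (hX : X.Finite) (v : α → V)
    (hV : (X.ncard : Cardinal) < Module.rank K V) : ¬ ⊤ ≤ Submodule.span K (v '' X) := by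
  intro htop
  have hrank : Module.rank K V ≤ (v '' X).ncard := by
    rw [← rank_top K V, ← top_le_iff.1 htop, cast_ncard (hX.image v)]
    exact rank_span_le _
  exact (hV.trans_le hrank).not_ge (Nat.cast_le.2 (ncard_image_le hX))

-- A coloop is handled as an element placed freely on the whole space, which no `X.ncard` vectors
-- can span.
lemma RepresentsOn.exists_submodule_le_span_iff {α : Type*} {M : Matroid α} {v : α → V}
    {X : Set α} {e : α} (h : RepresentsOn K M v X) (hX : X.Finite) (hXE : X ⊆ M.E)
    (he : IsPrincipalOver M X e) (hV : (X.ncard : Cardinal) < Module.rank K V) :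
    ∃ W : Submodule K V, ∀ S ⊆ X, e ∈ M.closure S ↔ W ≤ Submodule.span K (v '' S) := by
  rcases he with he | ⟨A, hAX, hA⟩
  · refine ⟨⊤, fun S hS ↦ iff_of_false (fun h ↦ he (M.closure_subset_closure hS h)) fun h ↦ ?_⟩
    exact not_top_le_span_image hX v hV (h.trans (Submodule.span_mono (image_mono hS)))
  · refine ⟨Submodule.span K (v '' A), fun S hS ↦ ?_⟩
    rw [hA S hS, Submodule.span_le, image_subset_iff]
    exact forall₂_congr fun a ha ↦ h.mem_closure_iff hXE hS (hAX ha)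

theorem RepresentsOn.exists_update_insert {α : Type*} [DecidableEq α] {M : Matroid α} {v : α → V}
    {X : Set α} {e : α} (h : RepresentsOn K M v X) (hX : X.Finite) (hXE : X ⊆ M.E) (heE : e ∈ M.E)
    (heX : e ∉ X) (he : IsPrincipalOver M X e) (hV : (X.ncard : Cardinal) < Module.rank K V)
    (hK : ((2 ^ X.ncard : ℕ) : ℕ∞) < ENat.card K) :
    ∃ w, RepresentsOn K M (Function.update v e w) (insert e X) := by
  obtain ⟨W, hW⟩ := h.exists_submodule_le_span_iff hX hXE he hV
  obtain ⟨w, hw⟩ := exists_forall_mem_span_image_iff_le hX v W hK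
  exact ⟨w, h.update heE heX fun S hS ↦ (hW S hS).trans (hw S hS).symm⟩

end GenericVector

section Online

/-- The online assignment that gives each arriving element the value chosen by `next`, which sees
the matroid up to and including that element and the values of the earlier elements. -/
def greedyMap {β : Type*} (next : ∀ m, Matroid (Fin (m + 1)) → (Fin m → β) → β) :
    ∀ m, Matroid (Fin m) → Fin m → β
  | 0, _ => Fin.elim0
  | m + 1, M =>
    let v := greedyMap next m (prefixMatroid m.le_succ M)
    Fin.snoc v (next m M v)

lemma prefixMatroid_prefixMatroid {k l m : ℕ} (hkl : k ≤ l) (hlm : l ≤ m) (M : Matroid (Fin m)) :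
    prefixMatroid hkl (prefixMatroid hlm M) = prefixMatroid (hkl.trans hlm) M := by
  refine Matroid.ext_indep rfl fun I _ ↦ ?_
  simp only [prefixMatroid, Matroid.comap_indep_iff, (Fin.castLE_injective _).injOn, and_true,
    image_image, Fin.castLE_castLE]

lemma greedyMap_prefixMatroid {β : Type*}
    (next : ∀ m, Matroid (Fin (m + 1)) → (Fin m → β) → β) {k m : ℕ} (hkm : k ≤ m)
    (M : Matroid (Fin m)) (i : Fin k) :
    greedyMap next k (prefixMatroid hkm M) i = greedyMap next m M (Fin.castLE hkm i) := by
  induction m, hkm using Nat.le_induction with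
  | base => exact congrArg (greedyMap next k · i) M.comap_id
  | succ m hkm ih =>
    have hcast : Fin.castLE (hkm.trans m.le_succ) i = (Fin.castLE hkm i).castSucc := rfl
    rw [← prefixMatroid_prefixMatroid hkm m.le_succ, ih, hcast, greedyMap, Fin.snoc_castSucc]

theorem exists_online_of_forall_exists_snoc {β : Type*} [Nonempty β]
    {C : ∀ m, Matroid (Fin m) → Prop} {P : ∀ m, Matroid (Fin m) → (Fin m → β) → Prop}
    (hC : ∀ m M, C (m + 1) M → C m (prefixMatroid m.le_succ M))
    (hzero : ∀ M, C 0 M → P 0 M Fin.elim0)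
    (hsnoc : ∀ m M v, C (m + 1) M → P m (prefixMatroid m.le_succ M) v →
      ∃ w, P (m + 1) M (Fin.snoc v w)) :
    ∃ f : ∀ m, Matroid (Fin m) → Fin m → β, (∀ m M, C m M → P m M (f m M)) ∧
      ∀ k m (hkm : k ≤ m) (M : Matroid (Fin m)) (i : Fin k),
        f k (prefixMatroid hkm M) i = f m M (Fin.castLE hkm i) := by
  let next (m : ℕ) (M : Matroid (Fin (m + 1))) (v : Fin m → β) : β :=
    Classical.epsilon fun w ↦ P (m + 1) M (Fin.snoc v w)
  refine ⟨greedyMap next, fun m ↦ ?_, fun _ _ ↦ greedyMap_prefixMatroid next⟩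
  induction m with
  | zero => exact hzero
  | succ m ih =>
    intro M hM
    exact Classical.epsilon_spec (hsnoc m M _ hM (ih _ (hC m M hM)))

end Online

/-- The ordered matroid is built up by principal extensions only: each element is added in this way
to the elements before it. This is the property of laminar matroids that the online representation
exploits. -/
def IsPrincipallyOrdered {α : Type*} [Preorder α] (M : Matroid α) : Prop :=
  ∀ e, IsPrincipalOver M (Iio e) e

lemma IsPrincipallyOrdered.prefixMatroid {k m : ℕ} {M : Matroid (Fin m)}
    (h : IsPrincipallyOrdered M) (hkm : k ≤ m) : IsPrincipallyOrdered (prefixMatroid hkm M) :=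
  fun i ↦ .comap <| by
    rw [Fin.image_castLE_Iio]
    exact h _

lemma IsLaminar.isPrincipallyOrdered {α : Type*} [Preorder α] {M : Matroid α} (h : IsLaminar M) :
    IsPrincipallyOrdered M :=
  fun _ ↦ h.isPrincipalOver self_notMem_Iio

lemma RepresentsOn.exists_snoc {K V : Type*} [Field K] [AddCommGroup V] [Module K V] {m : ℕ}
    {M : Matroid (Fin (m + 1))} {v : Fin m → V} (hE : M.E = univ)
    (hv : RepresentsOn K (prefixMatroid m.le_succ M) v univ)
    (hM : IsPrincipalOver M (Iio (Fin.last m)) (Fin.last m)) (hV : (m : Cardinal) < Module.rank K V)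
    (hK : ((2 ^ m : ℕ) : ℕ∞) < ENat.card K) :
    ∃ w, RepresentsOn K M (Fin.snoc v w : Fin (m + 1) → V) univ := by
  have hrange : Fin.castSucc '' univ = Iio (Fin.last m) := by
    ext i
    simp [Fin.lt_def]
  have hcard : (Iio (Fin.last m)).ncard = m := by simp [ncard_eq_toFinset_card']
  have hinsert : insert (Fin.last m) (Iio (Fin.last m)) = univ := by
    ext i
    simp [i.le_last]
  have hinit : RepresentsOn K M (Fin.snoc v (0 : V) : Fin (m + 1) → V) (Iio (Fin.last m)) := by
    rw [← hrange]
    refine .image_of_comap (Fin.castSucc_injective m).injOn ?_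
    rwa [Fin.snoc_comp_castSucc]
  obtain ⟨w, hw⟩ := hinit.exists_update_insert (toFinite _) (by simp [hE]) (by simp [hE]) (by simp)
    hM (by rwa [hcard]) (by rwa [hcard])
  rw [Fin.update_snoc_last, hinsert] at hw
  exact ⟨w, hw⟩

theorem stmt15_general (n : ℕ) (F : Type*) [Field F] (V : Type*) [AddCommGroup V] [Module F V]
    (hV : (n : Cardinal) ≤ Module.rank F V) (hF : ∀ m < n, ((2 ^ m : ℕ) : ℕ∞) < ENat.card F) :
    ∃ f : (m : ℕ) → Matroid (Fin m) → (Fin m → V),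
      (∀ m, m ≤ n → ∀ M : Matroid (Fin m), M.E = univ → IsPrincipallyOrdered M →
        ∀ S : Set (Fin m), (spanRank F (f m M '' S) : ℕ∞) = mRank M S) ∧
      (∀ k m (hkm : k ≤ m) (M : Matroid (Fin m)) (i : Fin k),
        f k (prefixMatroid hkm M) i = f m M (Fin.castLE hkm i)) := by
  obtain ⟨f, hf, hprefix⟩ := exists_online_of_forall_exists_snoc (β := V)
    (C := fun m M ↦ m ≤ n ∧ M.E = univ ∧ IsPrincipallyOrdered M)
    (P := fun m M v ↦ RepresentsOn F M v univ)
    (fun m M ⟨hm, hE, hM⟩ ↦ ⟨m.le_succ.trans hm, by simp [prefixMatroid, hE], hM.prefixMatroid _⟩)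
    (fun M _ I _ ↦ by simp [I.eq_empty_of_isEmpty])
    (fun m M v ⟨hm, hE, hM⟩ hv ↦
      hv.exists_snoc hE (hM _) ((Nat.cast_lt.2 hm).trans_le hV) (hF m hm))
  exact ⟨f, fun m hm M hE hM S ↦
    (hf m M ⟨hm, hE, hM⟩).spanRank_image hE.ge (subset_univ S) S.toFinite, hprefix⟩

/-- Let `F` be a field with at least `2ⁿ` elements.  There is an online matroid morphism from
the class of laminar matroids with at most `n` elements into the complete `F`-linear matroid
of rank `n` (the matroid on `Fⁿ` in which the rank of a set of vectors is the dimension of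
its `F`-linear span). -/
theorem stmt15 (n : ℕ) (F : Type*) [Field F]
    (hF : ((2 ^ n : ℕ) : Cardinal) ≤ Cardinal.mk F) :
    ∃ f : (m : ℕ) → Matroid (Fin m) → (Fin m → (Fin n → F)),
      (∀ m, m ≤ n → ∀ M : Matroid (Fin m), M.E = univ → IsLaminar M →
        ∀ S : Set (Fin m), (spanRank F (f m M '' S) : ℕ∞) = mRank M S) ∧
      (∀ k m (hkm : k ≤ m), m ≤ n → ∀ M : Matroid (Fin m), M.E = univ → IsLaminar M →
        ∀ i : Fin k, f k (prefixMatroid hkm M) i = f m M (Fin.castLE hkm i)) := by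
  have hcard : ∀ m < n, ((2 ^ m : ℕ) : ℕ∞) < ENat.card F := fun m hm ↦
    (Nat.cast_lt.2 (Nat.pow_lt_pow_right one_lt_two hm)).trans_le (Cardinal.natCast_le_toENat.2 hF)
  obtain ⟨f, hrank, hprefix⟩ := stmt15_general n F (Fin n → F) (by simp) hcard
  exact ⟨f, fun m hm M hE hM ↦ hrank m hm M hE hM.isPrincipallyOrdered,
    fun k m hkm _ M _ _ ↦ hprefix k m hkm M⟩
end

section
/- For n ≥ 1 and an ordered basis b = (b₁, …, bₙ) of 𝔽₂ⁿ = (Fin n → ZMod 2), define f_b on nonzero vectors by: writing x uniquely as x = Σ_{i ∈ T} b_i with T a nonempty subset of {1,…,n}, set f_b(x) = min T. Then there is an absolute constant c (one may take c = 3) such that for every n ≥ 1 and every nonempty set S of nonzero vectors of 𝔽₂ⁿ of rank r (r = the dimension of the 𝔽₂-linear span of S), the average over all ordered bases b of 𝔽₂ⁿ (chosen uniformly from the finite set of ordered bases) of the number of distinct values of f_b on S is at least (1 − 1/e)·log₂(r) − c. -/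
open Set

/-- The finite set of ordered bases of `𝔽₂ⁿ`: the linearly independent `n`-tuples of
vectors. -/
noncomputable def orderedBases (n : ℕ) : Finset (Fin n → (Fin n → ZMod 2)) :=
  (Set.toFinite {b : Fin n → (Fin n → ZMod 2) |
    LinearIndependent (ZMod 2) b}).toFinset

/-!
A uniformly random basis of `V` is `g • b₀` for a fixed basis `b₀` and a uniformly random
`g : V ≃ₗ[K] V`, so a point `p` of the projective space has leading index `i` with respect to it
exactly when `g⁻¹ • p` lies in the fixed set `leadingPoints b₀ i`. Since `V ≃ₗ[K] V` acts
2-transitively on `ℙ K V`, these events have a common probability and the same covariance for all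
pairs of distinct points, which is nonpositive because the centred indicators sum to zero over
`ℙ K V`. With `q = |K|` the common probability is at least `(q - 1) / q ^ (i + 1)` (indices starting
from `0`), so by Chebyshev's inequality `m` distinct points miss the index `i` with probability at
most `q ^ (i + 1) / ((q - 1) * m)`. Summing this geometric series over `i < ⌊log_q m⌋`, the expected
number of missed indices among these is at most `2`.
-/

open Finset Module MulAction
open scoped BigOperators LinearAlgebra.Projectivization

section MultiplyTransitive

variable {G X : Type*} [Group G] [Fintype G] [Fintype X] [MulAction G X]

lemma expect_smul_eq_expect [IsPretransitive G X] (f : X → ℝ) (x : X) :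
    𝔼 g : G, f (g • x) = 𝔼 y, f y := by
  have : Nonempty X := ⟨x⟩
  have orbit_const (y : X) : 𝔼 g : G, f (g • y) = 𝔼 g : G, f (g • x) := by
    obtain ⟨h, rfl⟩ := exists_smul_eq G x y
    exact Fintype.expect_equiv (Equiv.mulRight h) _ _ fun g => by simp [mul_smul]
  calc 𝔼 g : G, f (g • x)
      = 𝔼 y : X, 𝔼 g : G, f (g • y) := by simp_rw [orbit_const, Fintype.expect_const]
    _ = 𝔼 g : G, 𝔼 y, f (g • y) := expect_comm ..
    _ = 𝔼 _g : G, 𝔼 y, f y :=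
        expect_congr rfl fun g _ => Fintype.expect_equiv (toPerm g) _ _ fun _ => rfl
    _ = 𝔼 y, f y := Fintype.expect_const _

lemma expect_smul_mul_smul_nonpos [IsMultiplyPretransitive G X 2] {f : X → ℝ}
    (hf : ∑ x, f x = 0) {x y : X} (hxy : x ≠ y) :
    𝔼 g : G, f (g • x) * f (g • y) ≤ 0 := by
  have pair_const {z : X} (hz : z ≠ x) :
      𝔼 g : G, f (g • x) * f (g • z) = 𝔼 g : G, f (g • x) * f (g • y) := by
    obtain ⟨h, hx, hy⟩ := (is_two_pretransitive_iff (G := G)).mp ‹_› hz.symm hxy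
    refine (Fintype.expect_equiv (Equiv.mulRight h) _ _ fun g => ?_).symm
    simp [mul_smul, hx, hy]
  have sum_eq_zero : ∑ z, 𝔼 g : G, f (g • x) * f (g • z) = 0 := by
    have (g : G) : ∑ z, f (g • z) = 0 := (Equiv.sum_comp (toPerm g) f).trans hf
    simp [← expect_sum_comm, ← mul_sum, this]
  by_contra! hpos
  refine sum_eq_zero.not_gt (sum_pos' (fun z _ => ?_) ⟨y, mem_univ y, hpos⟩)
  obtain rfl | hz := eq_or_ne z x
  · exact expect_nonneg fun g _ => mul_self_nonneg _
  · exact (pair_const hz).symm ▸ hpos.le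

lemma expect_sum_smul_sq_le [IsMultiplyPretransitive G X 2] {f : X → ℝ}
    (hf : ∑ x, f x = 0) (s : Finset X) :
    𝔼 g : G, (∑ x ∈ s, f (g • x)) ^ 2 ≤ #s * 𝔼 x, f x ^ 2 := by
  classical
  have : IsPretransitive G X := isPretransitive_of_is_two_pretransitive
  calc 𝔼 g : G, (∑ x ∈ s, f (g • x)) ^ 2
      = ∑ x ∈ s, ∑ y ∈ s, 𝔼 g : G, f (g • x) * f (g • y) := by
        simp_rw [sq, sum_mul_sum, expect_sum_comm]
    _ ≤ ∑ x ∈ s, 𝔼 g : G, f (g • x) ^ 2 := by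
        refine sum_le_sum fun x hx => ?_
        rw [← add_sum_erase _ _ hx]
        simpa only [sq, add_le_iff_nonpos_right] using sum_nonpos fun y hy =>
          expect_smul_mul_smul_nonpos hf (ne_of_mem_erase hy).symm
    _ = #s * 𝔼 x, f x ^ 2 := by
        simp [expect_smul_eq_expect (fun x => f x ^ 2)]

lemma expect_indicator_one_eq_ncard_div_card (A : Set X) :
    𝔼 x, A.indicator (1 : X → ℝ) x = A.ncard / Fintype.card X := by
  lift A to Finset X using A.toFinite
  simp [Set.ncard_coe_finset, nnratCast_dens]

lemma sum_indicator_sub_density_eq_zero (A : Set X) :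
    ∑ x, (A.indicator (1 : X → ℝ) x - A.ncard / Fintype.card X) = 0 := by
  cases isEmpty_or_nonempty X
  · exact Fintype.sum_empty _
  rw [← Fintype.card_smul_expect, expect_sub_distrib, expect_indicator_one_eq_ncard_div_card,
    Fintype.expect_const, sub_self, smul_zero]

lemma expect_indicator_sub_density_sq_le (A : Set X) :
    𝔼 x, (A.indicator (1 : X → ℝ) x - A.ncard / Fintype.card X) ^ 2 ≤
      A.ncard / Fintype.card X := by
  cases isEmpty_or_nonempty X
  · simp
  set p : ℝ := A.ncard / Fintype.card X with hp
  have sq_eq (x : X) :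
      (A.indicator (1 : X → ℝ) x - p) ^ 2 = (1 - 2 * p) * A.indicator 1 x + p ^ 2 := by
    by_cases hx : x ∈ A <;> simp [hx]; ring
  simp_rw [sq_eq, expect_add_distrib, ← mul_expect, expect_indicator_one_eq_ncard_div_card, ← hp,
    Fintype.expect_const]
  nlinarith [sq_nonneg p]

lemma one_sub_card_div_le_expect_indicator_hits [IsMultiplyPretransitive G X 2]
    {s : Finset X} (hs : s.Nonempty) {A : Set X} (hA : A.Nonempty) :
    1 - Fintype.card X / (#s * A.ncard) ≤
      𝔼 g : G, {g : G | ∃ x ∈ s, g • x ∈ A}.indicator (1 : G → ℝ) g := by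
  have : Nonempty X := hA.nonempty
  set p : ℝ := A.ncard / Fintype.card X with hp
  have p_pos : 0 < p := by have := hA.ncard_pos; positivity
  have : (0 : ℝ) < #s := by exact_mod_cast hs.card_pos
  let f (x : X) : ℝ := A.indicator 1 x - p
  have miss_le (g : G) : (1 - {g : G | ∃ x ∈ s, g • x ∈ A}.indicator 1 g) * (#s * p) ^ 2 ≤
      (∑ x ∈ s, f (g • x)) ^ 2 := by
    by_cases hit : ∃ x ∈ s, g • x ∈ A
    · simpa [hit] using sq_nonneg (∑ x ∈ s, f (g • x))
    · have (x) (hx : x ∈ s) : f (g • x) = -p := by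
        simp [f, show g • x ∉ A from fun h => hit ⟨x, hx, h⟩]
      simp [hit, sum_congr rfl this]
  have chebyshev : (1 - 𝔼 g : G, {g : G | ∃ x ∈ s, g • x ∈ A}.indicator (1 : G → ℝ) g) *
      (#s * p) ^ 2 ≤ #s * p := calc
    _ = 𝔼 g : G, (1 - {g : G | ∃ x ∈ s, g • x ∈ A}.indicator 1 g) * (#s * p) ^ 2 := by
      rw [← expect_mul, expect_sub_distrib, Fintype.expect_const]
    _ ≤ 𝔼 g : G, (∑ x ∈ s, f (g • x)) ^ 2 := expect_le_expect fun g _ => miss_le g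
    _ ≤ #s * 𝔼 x, f x ^ 2 := expect_sum_smul_sq_le (sum_indicator_sub_density_eq_zero A) s
    _ ≤ #s * p := mul_le_mul_of_nonneg_left (expect_indicator_sub_density_sq_le A) (by positivity)
  have inv_eq : (Fintype.card X : ℝ) / (#s * A.ncard) = #s * p / (#s * p) ^ 2 := by
    have := hA.ncard_pos
    rw [hp]
    field_simp
  rw [sub_le_comm, inv_eq, le_div_iff₀ (by positivity)]
  exact chebyshev

end MultiplyTransitive

section LeadingIndex

lemma support_repr_sum {ι R M : Type*} [Semiring R] [Nontrivial R] [AddCommMonoid M] [Module R M]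
    (b : Basis ι R M) (T : Finset ι) : Function.support (b.repr (∑ i ∈ T, b i)) = T := by
  classical
  ext j
  simp [Finsupp.single_apply]

variable {ι K V : Type*} [Field K] [AddCommGroup V] [Module K V]

instance isPretransitive_linearEquiv_basis : IsPretransitive (V ≃ₗ[K] V) (Basis ι K V) where
  exists_smul_eq b c := ⟨b.equiv c (.refl ι), Basis.eq_of_apply_eq fun i => by simp⟩

variable [LinearOrder ι]

/-- The leading indices of the vectors in `S` with respect to an ordered basis `b`, where the
leading index of a nonzero vector is the least index with a nonzero `b`-coordinate. The vector `0`
contributes no index. -/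
def leadingIndices (b : Basis ι K V) (S : Set V) : Set ι :=
  {i | ∃ x ∈ S, IsLeast (Function.support (b.repr x)) i}

/-- The points of projective space whose homogeneous coordinates with respect to `b` have leading
index `i`. The choice of representative is immaterial by `mk_mem_leadingPoints_iff`. -/
def leadingPoints (b : Basis ι K V) (i : ι) : Set (ℙ K V) :=
  {p | IsLeast (Function.support (b.repr p.rep)) i}

lemma mk_mem_leadingPoints_iff {b : Basis ι K V} {i : ι} {x : V} (hx : x ≠ 0) :
    Projectivization.mk K x hx ∈ leadingPoints b i ↔
      IsLeast (Function.support (b.repr x)) i := by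
  obtain ⟨a, ha⟩ := Projectivization.exists_smul_eq_mk_rep K x hx
  have support_eq : Function.support (b.repr (a • x)) = Function.support (b.repr x) := by
    ext j
    simp [Units.smul_def]
  rw [leadingPoints, Set.mem_ofPred_eq, ← ha, support_eq]

lemma mem_leadingPoints_smul_iff {b : Basis ι K V} {i : ι} (g : V ≃ₗ[K] V) (p : ℙ K V) :
    p ∈ leadingPoints (g • b) i ↔ g⁻¹ • p ∈ leadingPoints b i := by
  induction p using Projectivization.ind with
  | h x hx =>
    rw [Projectivization.smul_mk, mk_mem_leadingPoints_iff, mk_mem_leadingPoints_iff,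
      Basis.repr_smul]
    rfl

lemma exists_isLeast_support_repr_and_repr_eq [Finite ι] (b : Basis ι K V) (i : ι)
    (c : Set.Ioi i → K) : ∃ x : V, IsLeast (Function.support (b.repr x)) i ∧
      b.repr x i = 1 ∧ ∀ j : Set.Ioi i, b.repr x j = c j := by
  have := Fintype.ofFinite ι
  let coords : ι → K := Function.extend Subtype.val c (Pi.single i 1)
  have coords_le {j : ι} (hj : j ≤ i) : coords j = Pi.single (M := fun _ => K) i 1 j :=
    Function.extend_apply' _ _ _ fun ⟨k, hk⟩ => (hk ▸ hj).not_gt k.2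
  obtain ⟨x, hx⟩ := b.equivFun.surjective coords
  have repr_eq : ⇑(b.repr x) = coords := by rw [← b.equivFun_apply, hx]
  have repr_i : b.repr x i = 1 := by simp [repr_eq, coords_le le_rfl]
  refine ⟨x, ⟨by simp [repr_i], fun j hj => ?_⟩, repr_i, fun j => ?_⟩
  · contrapose! hj
    simp [repr_eq, coords_le hj.le, hj.ne]
  · exact (congrFun repr_eq j).trans (Subtype.val_injective.extend_apply ..)

lemma pow_ncard_Ioi_le_ncard_leadingPoints [Finite ι] [Finite K] (b : Basis ι K V) (i : ι) :
    Nat.card K ^ (Set.Ioi i).ncard ≤ (leadingPoints b i).ncard := by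
  have : Module.Finite K V := .of_basis b
  have : Finite V := Module.finite_of_finite K
  choose v isLeast_v repr_v_self repr_v using exists_isLeast_support_repr_and_repr_eq b i
  have v_ne_zero c : v c ≠ 0 := fun h => by simpa [h] using repr_v_self c
  have mk_injective : Function.Injective fun c => Projectivization.mk K (v c) (v_ne_zero c) := by
    intro c d hcd
    obtain ⟨a, ha⟩ := (Projectivization.mk_eq_mk_iff' ..).mp hcd
    have repr_eq (j : ι) : a * b.repr (v d) j = b.repr (v c) j := by simp [← ha]
    obtain rfl : a = 1 := by simpa [repr_v_self] using repr_eq i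
    funext j
    simpa [repr_v] using (repr_eq j).symm
  calc Nat.card K ^ (Set.Ioi i).ncard
      = (Set.range fun c => Projectivization.mk K (v c) (v_ne_zero c)).ncard := by
        rw [Set.ncard_range_of_injective mk_injective, Nat.card_fun, Nat.card_coe_set_eq]
    _ ≤ (leadingPoints b i).ncard := Set.ncard_le_ncard <| by
        rintro _ ⟨c, rfl⟩
        exact (mk_mem_leadingPoints_iff _).mpr (isLeast_v c)

lemma expect_indicator_leadingPoints_eq [Fintype (V ≃ₗ[K] V)] [Fintype (Basis ι K V)]
    (b₀ : Basis ι K V) (i : ι) (s : Finset (ℙ K V)) :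
    𝔼 b : Basis ι K V,
        {b : Basis ι K V | ∃ p ∈ s, p ∈ leadingPoints b i}.indicator (1 : Basis ι K V → ℝ) b =
      𝔼 g : V ≃ₗ[K] V, {g : V ≃ₗ[K] V | ∃ p ∈ s, g • p ∈ leadingPoints b₀ i}.indicator 1 g := by
  rw [← expect_smul_eq_expect (G := V ≃ₗ[K] V) _ b₀]
  refine Fintype.expect_equiv (Equiv.inv _) _ _ fun g => ?_
  by_cases hit : ∃ p ∈ s, g⁻¹ • p ∈ leadingPoints b₀ i <;>
    simp [Set.indicator, mem_leadingPoints_smul_iff, hit, -Basis.smul_eq_map]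

lemma card_projectivization_div_ncard_leadingPoints_le {n : ℕ} [Finite K] [Fintype (ℙ K V)]
    (b : Basis (Fin n) K V) (i : Fin n) :
    (Fintype.card (ℙ K V) : ℝ) / (leadingPoints b i).ncard ≤
      Nat.card K ^ (i + 1 : ℕ) / (Nat.card K - 1) := by
  have : Module.Finite K V := .of_basis b
  have : Finite V := Module.finite_of_finite K
  have one_lt : (1 : ℝ) < Nat.card K := by exact_mod_cast Finite.one_lt_card
  have card_points : (Fintype.card (ℙ K V) : ℝ) * (Nat.card K - 1) ≤ Nat.card K ^ n := by
    have h := Projectivization.card' K V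
    rw [natCard_eq_pow_finrank (K := K), finrank_eq_card_basis b, Fintype.card_fin,
      Nat.card_eq_fintype_card (α := ℙ K V)] at h
    have h' := congrArg (Nat.cast (R := ℝ)) h
    push_cast [Finite.one_lt_card.le] at h'
    linarith
  have card_leading : (Nat.card K : ℝ) ^ (n - 1 - i) ≤ (leadingPoints b i).ncard := by
    have h := pow_ncard_Ioi_le_ncard_leadingPoints b i
    rw [Set.ncard_eq_toFinset_card', Set.toFinset_Ioi, Fin.card_Ioi] at h
    exact_mod_cast h
  have leading_pos : (0 : ℝ) < (leadingPoints b i).ncard := card_leading.trans_lt' (by positivity)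
  rw [div_le_div_iff₀ leading_pos (by linarith)]
  calc (Fintype.card (ℙ K V) : ℝ) * (Nat.card K - 1)
      ≤ Nat.card K ^ n := card_points
    _ = Nat.card K ^ (i + 1 : ℕ) * Nat.card K ^ (n - 1 - i) := by
        rw [← pow_add]
        congr 1
        omega
    _ ≤ Nat.card K ^ (i + 1 : ℕ) * (leadingPoints b i).ncard := by gcongr

lemma one_sub_div_le_expect_indicator_leadingPoints {n : ℕ} [Finite K]
    [Fintype (Basis (Fin n) K V)] (b₀ : Basis (Fin n) K V) (i : Fin n) {s : Finset (ℙ K V)}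
    (hs : s.Nonempty) :
    1 - (Nat.card K : ℝ) ^ (i + 1 : ℕ) / (Nat.card K - 1) / #s ≤
      𝔼 b : Basis (Fin n) K V,
        {b : Basis (Fin n) K V | ∃ p ∈ s, p ∈ leadingPoints b i}.indicator 1 b := by
  have : Module.Finite K V := .of_basis b₀
  have : Finite V := Module.finite_of_finite K
  have := Fintype.ofFinite (ℙ K V)
  have : Finite (V ≃ₗ[K] V) := DFunLike.finite _
  have := Fintype.ofFinite (V ≃ₗ[K] V)
  have hA : (leadingPoints b₀ i).Nonempty := by
    have := (pow_pos Nat.card_pos _).trans_le (pow_ncard_Ioi_le_ncard_leadingPoints b₀ i)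
    exact Set.nonempty_of_ncard_ne_zero this.ne'
  calc 1 - (Nat.card K : ℝ) ^ (i + 1 : ℕ) / (Nat.card K - 1) / #s
      ≤ 1 - Fintype.card (ℙ K V) / (leadingPoints b₀ i).ncard / #s :=
        sub_le_sub_left (div_le_div_of_nonneg_right
          (card_projectivization_div_ncard_leadingPoints_le b₀ i) (by positivity)) 1
    _ = 1 - Fintype.card (ℙ K V) / (#s * (leadingPoints b₀ i).ncard) := by
        rw [div_div, mul_comm]
    _ ≤ _ := one_sub_card_div_le_expect_indicator_hits hs hA
    _ = _ := (expect_indicator_leadingPoints_eq b₀ i s).symm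

lemma exists_finset_projectivization_card_eq [Finite V] {S : Set V} (hS0 : ∀ x ∈ S, x ≠ 0)
    (hS : S.Pairwise fun x y => LinearIndependent K ![x, y]) :
    ∃ s : Finset (ℙ K V), #s = S.ncard ∧
      ∀ (b : Basis ι K V) (i : ι), i ∈ leadingIndices b S ↔ ∃ p ∈ s, p ∈ leadingPoints b i := by
  let point (x : S) : ℙ K V := .mk K x (hS0 x x.2)
  have point_injective : Function.Injective point := by
    intro x y hxy
    by_contra! hne
    have : LinearIndependent K ![(x : V), (y : V)] := hS x.2 y.2 (Subtype.coe_ne_coe.mpr hne)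
    rw [← Projectivization.independent_mk_iff_LinearIndependent (hS0 x x.2) (hS0 y y.2),
      Projectivization.independent_pair_iff_ne] at this
    exact this hxy
  refine ⟨(Set.range point).toFinite.toFinset, ?_, fun b i => ?_⟩
  · rw [← Set.ncard_eq_toFinset_card, Set.ncard_range_of_injective point_injective,
      Nat.card_coe_set_eq]
  · simp [leadingIndices, point, mk_mem_leadingPoints_iff]

lemma one_sub_div_le_expect_indicator_leadingIndices {n : ℕ} [Finite K]
    [Fintype (Basis (Fin n) K V)] (b₀ : Basis (Fin n) K V) (i : Fin n) {S : Set V}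
    (hne : S.Nonempty) (hS0 : ∀ x ∈ S, x ≠ 0)
    (hS : S.Pairwise fun x y => LinearIndependent K ![x, y]) :
    1 - (Nat.card K : ℝ) ^ (i + 1 : ℕ) / (Nat.card K - 1) / S.ncard ≤
      𝔼 b : Basis (Fin n) K V, (leadingIndices b S).indicator 1 i := by
  have : Module.Finite K V := .of_basis b₀
  have : Finite V := Module.finite_of_finite K
  obtain ⟨s, card_s, mem_iff⟩ := exists_finset_projectivization_card_eq (ι := Fin n) hS0 hS
  have s_nonempty : s.Nonempty := card_pos.mp (card_s ▸ hne.ncard_pos)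
  have indicator_eq (b : Basis (Fin n) K V) : (leadingIndices b S).indicator (1 : Fin n → ℝ) i =
      {b : Basis (Fin n) K V | ∃ p ∈ s, p ∈ leadingPoints b i}.indicator 1 b := by
    by_cases hit : ∃ p ∈ s, p ∈ leadingPoints b i <;> simp [Set.indicator, mem_iff, hit]
  simp_rw [indicator_eq, ← card_s]
  exact one_sub_div_le_expect_indicator_leadingPoints b₀ i s_nonempty

lemma sum_pow_succ_div_div_le_two {q : ℝ} (hq : 2 ≤ q) {k : ℕ} {m : ℝ} (hm : q ^ k ≤ m) :
    ∑ i : Fin k, q ^ (i + 1 : ℕ) / (q - 1) / m ≤ 2 := by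
  have m_pos : 0 < m := lt_of_lt_of_le (by positivity) hm
  have sum_eq : ∑ i : Fin k, q ^ (i + 1 : ℕ) = q * ((q ^ k - 1) / (q - 1)) := by
    simp_rw [pow_succ', ← mul_sum]
    rw [Fin.sum_univ_eq_sum_range (fun i => q ^ i), geom_sum_eq (by linarith)]
  have q_sub_pos : 0 < q - 1 := by linarith
  have q_le : q ≤ 2 * (q - 1) ^ 2 := by nlinarith
  rw [← sum_div, ← sum_div, sum_eq, div_le_iff₀ m_pos, div_le_iff₀ q_sub_pos, mul_div_assoc',
    div_le_iff₀ q_sub_pos]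
  calc q * (q ^ k - 1) ≤ 2 * (q - 1) ^ 2 * m :=
        mul_le_mul q_le (by linarith) (sub_nonneg.mpr (one_le_pow₀ (by linarith))) (by positivity)
    _ = 2 * m * (q - 1) * (q - 1) := by ring

lemma logb_sub_three_le_sum {q m : ℕ} (hq : 1 < q) (hm : m ≠ 0) :
    Real.logb q m - 3 ≤
      ∑ i : Fin (Nat.log q m), (1 - (q : ℝ) ^ (i + 1 : ℕ) / (q - 1) / m) := by
  have logb_lt : Real.logb q m < Nat.log q m + 1 := by
    simpa only [Real.natFloor_logb_natCast] using Nat.lt_floor_add_one (Real.logb q m)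
  have pow_le : (q : ℝ) ^ Nat.log q m ≤ m := by exact_mod_cast Nat.pow_log_le_self q hm
  have sum_le := sum_pow_succ_div_div_le_two (by exact_mod_cast hq) pow_le
  rw [sum_sub_distrib, Fin.sum_const, nsmul_one]
  linarith

lemma expect_ncard_leadingIndices_eq_sum [Fintype ι] [Fintype (Basis ι K V)] (S : Set V) :
    𝔼 b : Basis ι K V, ((leadingIndices b S).ncard : ℝ) =
      ∑ i, 𝔼 b : Basis ι K V, (leadingIndices b S).indicator 1 i := by
  classical
  rw [← expect_sum_comm]
  refine expect_congr rfl fun b _ => ?_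
  simp [Set.indicator, Set.ncard_eq_toFinset_card', Set.toFinset]

lemma image_eq_leadingIndices (b : Basis ι K V) {S : Set V}
    {f : V → ι} (hf : ∀ x ∈ S, ∃ T : Finset ι, x = ∑ i ∈ T, b i ∧ f x ∈ T ∧ ∀ j ∈ T, f x ≤ j) :
    f '' S = leadingIndices b S := by
  have isLeast_f (x) (hx : x ∈ S) : IsLeast (Function.support (b.repr x)) (f x) := by
    obtain ⟨T, x_eq, mem_T, le_T⟩ := hf x hx
    rw [x_eq, support_repr_sum, ← x_eq]
    exact ⟨mem_T, le_T⟩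
  ext i
  refine exists_congr fun x => and_congr_right fun hx => ?_
  exact ⟨fun h => h ▸ isLeast_f x hx, (isLeast_f x hx).unique⟩

end LeadingIndex

lemma pairwise_linearIndependent_of_zmod_two {V : Type*} [AddCommGroup V] [Module (ZMod 2) V]
    {S : Set V} (hS0 : ∀ x ∈ S, x ≠ 0) :
    S.Pairwise fun x y => LinearIndependent (ZMod 2) ![x, y] := by
  intro x hx y hy hxy
  refine (LinearIndependent.pair_iff' (hS0 x hx)).mpr fun a => ?_
  obtain rfl | rfl : a = 0 ∨ a = 1 := by decide +revert
  · simpa using (hS0 y hy).symm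
  · simpa using hxy

lemma expect_orderedBases {n : ℕ} [Fintype (Basis (Fin n) (ZMod 2) (Fin n → ZMod 2))]
    (f : (Fin n → Fin n → ZMod 2) → ℝ) :
    𝔼 b ∈ orderedBases n, f b = 𝔼 b : Basis (Fin n) (ZMod 2) (Fin n → ZMod 2), f b := by
  classical
  have orderedBases_eq : orderedBases n =
      Finset.univ.image fun b : Basis (Fin n) (ZMod 2) (Fin n → ZMod 2) => ⇑b := by
    ext b
    simp only [orderedBases, Set.Finite.mem_toFinset, Set.mem_ofPred_eq, Finset.mem_image,
      Finset.mem_univ, true_and]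
    refine ⟨fun hb => ⟨.mk hb (hb.span_eq_top_of_card_eq_finrank' (by simp)).ge, by simp⟩, ?_⟩
    rintro ⟨b, rfl⟩
    exact b.linearIndependent
  rw [orderedBases_eq, expect_image (DFunLike.coe_injective (F := Basis (Fin n) _ _)).injOn]

lemma sum_orderedBases_ncard_image_div_card_eq {n : ℕ}
    [Fintype (Basis (Fin n) (ZMod 2) (Fin n → ZMod 2))] {S : Set (Fin n → ZMod 2)}
    {F : (Fin n → Fin n → ZMod 2) → (Fin n → ZMod 2) → Fin n}
    (hF : ∀ b, LinearIndependent (ZMod 2) b → ∀ x ∈ S,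
      ∃ T : Finset (Fin n), x = ∑ i ∈ T, b i ∧ F b x ∈ T ∧ ∀ j ∈ T, F b x ≤ j) :
    (∑ b ∈ orderedBases n, ((F b '' S).ncard : ℝ)) / #(orderedBases n) =
      𝔼 b : Basis (Fin n) (ZMod 2) (Fin n → ZMod 2), ((leadingIndices b S).ncard : ℝ) := by
  rw [← expect_eq_sum_div_card, expect_orderedBases]
  exact expect_congr rfl fun b _ => by
    rw [image_eq_leadingIndices b (hF b b.linearIndependent)]

lemma spanRank_le_ncard {K V : Type*} [Field K] [AddCommGroup V] [Module K V] {S : Set V}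
    (hS : S.Finite) : spanRank K S ≤ S.ncard := by
  have := hS.fintype
  exact (finrank_span_le_card S).trans_eq (Set.ncard_eq_toFinset_card' S).symm

lemma mul_logb_natCast_le {c q : ℝ} (hc : c ≤ 1) (hq : 1 < q) {a b : ℕ} (h : a ≤ b) :
    c * Real.logb q a ≤ Real.logb q b := by
  obtain rfl | ha := a.eq_zero_or_pos
  · simpa [Real.logb] using div_nonneg (Real.log_natCast_nonneg b) (Real.log_nonneg hq.le)
  calc c * Real.logb q a
      ≤ Real.logb q a :=
        mul_le_of_le_one_left (Real.logb_nonneg hq (by exact_mod_cast ha)) hc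
    _ ≤ Real.logb q b :=
        Real.logb_le_logb_of_le hq (by exact_mod_cast ha) (by exact_mod_cast h)

theorem stmt18_general {K V : Type*} [Field K] [Finite K] [AddCommGroup V] [Module K V]
    [Module.Finite K V] {n : ℕ} (hV : finrank K V = n) [Fintype (Basis (Fin n) K V)] {S : Set V}
    (hne : S.Nonempty) (hS0 : ∀ x ∈ S, x ≠ 0)
    (hS : S.Pairwise fun x y => LinearIndependent K ![x, y]) :
    Real.logb (Nat.card K) S.ncard - 3 ≤
      𝔼 b : Basis (Fin n) K V, ((leadingIndices b S).ncard : ℝ) := by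
  have : Finite V := Module.finite_of_finite K
  have one_lt : 1 < Nat.card K := Finite.one_lt_card
  have ncard_ne : S.ncard ≠ 0 := hne.ncard_pos.ne'
  have log_le : Nat.log (Nat.card K) S.ncard ≤ n := by
    rw [← Nat.pow_le_pow_iff_right one_lt, ← hV, ← natCard_eq_pow_finrank (K := K) (V := V)]
    exact (Nat.pow_log_le_self _ ncard_ne).trans (Set.ncard_le_card S)
  let expect_indicator (i : Fin n) : ℝ :=
    𝔼 b : Basis (Fin n) K V, (leadingIndices b S).indicator 1 i
  have expect_indicator_nonneg (i : Fin n) : 0 ≤ expect_indicator i :=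
    expect_nonneg fun b _ => Set.indicator_nonneg (fun _ _ => zero_le_one) i
  calc Real.logb (Nat.card K) S.ncard - 3
      ≤ ∑ i : Fin (Nat.log (Nat.card K) S.ncard),
          (1 - (Nat.card K : ℝ) ^ (i + 1 : ℕ) / (Nat.card K - 1) / S.ncard) :=
        logb_sub_three_le_sum one_lt ncard_ne
    _ ≤ ∑ i, expect_indicator (Fin.castLE log_le i) :=
        sum_le_sum fun i _ => one_sub_div_le_expect_indicator_leadingIndices
          (finBasisOfFinrankEq K V hV) (Fin.castLE log_le i) hne hS0 hS
    _ = ∑ i ∈ univ.map (Fin.castLEEmb log_le), expect_indicator i :=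
        (sum_map Finset.univ (Fin.castLEEmb log_le) expect_indicator).symm
    _ ≤ ∑ i, expect_indicator i := sum_le_univ_sum_of_nonneg expect_indicator_nonneg
    _ = 𝔼 b : Basis (Fin n) K V, ((leadingIndices b S).ncard : ℝ) :=
        (expect_ncard_leadingIndices_eq_sum S).symm

/-- There is an absolute constant `c > 0` such that the following holds for every `n ≥ 1`.
Let `S` be a nonempty set of nonzero vectors of `𝔽₂ⁿ` of rank `r`, and for each ordered
basis `b` of `𝔽₂ⁿ` let `F b` send each nonzero vector `x = ∑_{i ∈ T} b i` (with `T` the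
unique nonempty index set of its expansion) to `min T`.  Then the average, over a uniformly
random ordered basis `b`, of the number of distinct values of `F b` on `S` is at least
`(1 - 1/e) · log₂ r - c`. -/
theorem stmt18 : ∃ c : ℝ, 0 < c ∧ ∀ n : ℕ, 1 ≤ n →
    ∀ S : Set (Fin n → ZMod 2), S.Nonempty → (∀ x ∈ S, x ≠ 0) →
    ∀ F : (Fin n → (Fin n → ZMod 2)) → ((Fin n → ZMod 2) → Fin n),
    (∀ b : Fin n → (Fin n → ZMod 2), LinearIndependent (ZMod 2) b → ∀ x ∈ S,
      ∃ T : Finset (Fin n), x = ∑ i ∈ T, b i ∧ F b x ∈ T ∧ ∀ j ∈ T, F b x ≤ j) →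
    (1 - 1 / Real.exp 1) * Real.logb 2 (spanRank (ZMod 2) S) - c ≤
      (∑ b ∈ orderedBases n, ((F b '' S).ncard : ℝ)) / ((orderedBases n).card : ℝ) := by
  refine ⟨3, by norm_num, fun n _ S hne hS0 F hF => ?_⟩
  have : Finite (Basis (Fin n) (ZMod 2) (Fin n → ZMod 2)) := DFunLike.finite _
  have := Fintype.ofFinite (Basis (Fin n) (ZMod 2) (Fin n → ZMod 2))
  calc (1 - 1 / Real.exp 1) * Real.logb 2 (spanRank (ZMod 2) S) - 3
      ≤ Real.logb 2 S.ncard - 3 :=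
        sub_le_sub_right (mul_logb_natCast_le (sub_le_self 1 (by positivity)) one_lt_two
          (spanRank_le_ncard S.toFinite)) 3
    _ ≤ 𝔼 b : Basis (Fin n) (ZMod 2) (Fin n → ZMod 2), ((leadingIndices b S).ncard : ℝ) := by
        simpa using stmt18_general (finrank_fin_fun (ZMod 2)) hne hS0
          (pairwise_linearIndependent_of_zmod_two hS0)
    _ = _ := (sum_orderedBases_ncard_image_div_card_eq hF).symm
end
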